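/- arXiv:1112.5415 — 5 statements merged into one kernel-verified Lean document; each statement's English description precedes it below -/
import Mathlib

section
/- Fix any norm on V. Then: (i) for every M ≥ 0, the set {ρ ∈ Φ : ‖ρ‖ ≤ M} is finite; (ii) for every ε > 0, the set {ρ ∈ Φ⁺ : dist(ρ̂, Q̂) ≥ ε} is finite. -/
open Filter Topology

noncomputable section

variable {ι V : Type*} [Fintype ι] [NormedAddCommGroup V] [NormedSpace ℝ V]

/-- The set of simple `B`-reflections: the linear automorphisms of `V` given by the
`B`-reflection formula `u ↦ u - 2 (B α u / B α α) • α` associated to a simple root `α ∈ Δ`. -/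
def simpleReflections (B : LinearMap.BilinForm ℝ V) (Δ : Module.Basis ι ℝ V) :
    Set (V ≃ₗ[ℝ] V) :=
  { e | ∃ i : ι, ∀ u : V, e u = u - (2 * B (Δ i) u / B (Δ i) (Δ i)) • Δ i }

/-- The geometric Coxeter group `W`: the subgroup of linear automorphisms of `V`
generated by the simple `B`-reflections. -/
def cox (B : LinearMap.BilinForm ℝ V) (Δ : Module.Basis ι ℝ V) : Subgroup (V ≃ₗ[ℝ] V) :=
  Subgroup.closure (simpleReflections B Δ)

/-- The root system `Φ = W ⬝ Δ`. -/
def Phi (B : LinearMap.BilinForm ℝ V) (Δ : Module.Basis ι ℝ V) : Set V :=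
  { ρ | ∃ w ∈ cox B Δ, ∃ i : ι, w (Δ i) = ρ }

/-- The positive roots `Φ⁺ = Φ ∩ cone(Δ)`. -/
def posPhi (B : LinearMap.BilinForm ℝ V) (Δ : Module.Basis ι ℝ V) : Set V :=
  { ρ ∈ Phi B Δ | ∀ i : ι, 0 ≤ Δ.repr ρ i }

/-- `|v|₁`: the sum of the coordinates of `v` in the basis `Δ`. -/
def l1 (Δ : Module.Basis ι ℝ V) (v : V) : ℝ := ∑ i : ι, Δ.repr v i

/-- The normalization map `v ↦ v̂ = v / |v|₁`. -/
def nrm (Δ : Module.Basis ι ℝ V) (v : V) : V := (l1 Δ v)⁻¹ • v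

/-- The set `Φ̂` of normalized roots. -/
def nPhi (B : LinearMap.BilinForm ℝ V) (Δ : Module.Basis ι ℝ V) : Set V :=
  nrm Δ '' posPhi B Δ

/-- `E(Φ)`: the set of accumulation points of the set of normalized roots. -/
def Eset (B : LinearMap.BilinForm ℝ V) (Δ : Module.Basis ι ℝ V) : Set V :=
  { x | AccPt x (𝓟 (nPhi B Δ)) }

/-- The isotropic cone `Q` of `B`. -/
def isoQ (B : LinearMap.BilinForm ℝ V) : Set V := { v | B v v = 0 }

set_option linter.unusedSectionVars false

/-- words in the reflections -/
def wd (r : ι → V ≃ₗ[ℝ] V) (l : List ι) : V ≃ₗ[ℝ] V := (l.map r).prod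

/-- being a word -/
def isW (r : ι → V ≃ₗ[ℝ] V) (g : V ≃ₗ[ℝ] V) : Prop := ∃ l : List ι, wd r l = g

/-- word length -/
def len (r : ι → V ≃ₗ[ℝ] V) (g : V ≃ₗ[ℝ] V) : ℕ :=
  sInf {n | ∃ l : List ι, l.length = n ∧ wd r l = g}

/-- alternating words ending in the second letter -/
def alt (r : ι → V ≃ₗ[ℝ] V) : ι → ι → ℕ → V ≃ₗ[ℝ] V
  | _, _, 0 => 1
  | s, t, (k+1) => alt r t s k * r t

lemma wd_append (r : ι → V ≃ₗ[ℝ] V) (l m : List ι) : wd r (l ++ m) = wd r l * wd r m := by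
  simp [wd]

lemma len_wd (r : ι → V ≃ₗ[ℝ] V) (l : List ι) : len r (wd r l) ≤ l.length :=
  Nat.sInf_le ⟨l, rfl, rfl⟩

lemma exists_len (r : ι → V ≃ₗ[ℝ] V) {g : V ≃ₗ[ℝ] V} (h : isW r g) :
    ∃ l : List ι, l.length = len r g ∧ wd r l = g := by
  obtain ⟨l, hl⟩ := h
  exact Nat.sInf_mem (s := {n | ∃ l : List ι, l.length = n ∧ wd r l = g}) ⟨l.length, l, rfl, hl⟩

lemma len_mul (r : ι → V ≃ₗ[ℝ] V) {g : V ≃ₗ[ℝ] V} (h : isW r g) (l : List ι) :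
    len r (g * wd r l) ≤ len r g + l.length := by
  obtain ⟨m, h1, h2⟩ := exists_len r h
  rw [← h1]
  conv_lhs => rw [← h2]
  rw [← wd_append, ← List.length_append]
  exact len_wd r _

lemma isW_mul (r : ι → V ≃ₗ[ℝ] V) {g h : V ≃ₗ[ℝ] V} (hg : isW r g) (hh : isW r h) :
    isW r (g * h) := by
  obtain ⟨l, rfl⟩ := hg
  obtain ⟨m, rfl⟩ := hh
  exact ⟨l ++ m, wd_append r l m⟩

lemma isW_r (r : ι → V ≃ₗ[ℝ] V) (i : ι) : isW r (r i) := ⟨[i], by simp [wd]⟩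

lemma alt_word (r : ι → V ≃ₗ[ℝ] V) (k : ℕ) : ∀ s t : ι, ∃ l : List ι, l.length = k ∧ wd r l = alt r s t k := by
  induction k with
  | zero => intro s t; exact ⟨[], rfl, by simp [wd, alt]⟩
  | succ k ih =>
    intro s t
    obtain ⟨l, h1, h2⟩ := ih t s
    refine ⟨l ++ [t], by simp [h1], ?_⟩
    rw [wd_append, h2, alt]; simp [wd]

lemma alt_left (r : ι → V ≃ₗ[ℝ] V) (k : ℕ) : ∀ s t : ι,
    alt r s t (k+1) = r (if Even k then t else s) * alt r s t k := by
  induction k with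
  | zero => intro s t; simp [alt]
  | succ k ih =>
    intro s t
    rw [alt, ih t s, alt, mul_assoc]
    congr 2
    by_cases h : Even k <;> simp [h, Nat.even_add_one]

lemma alt_add (r : ι → V ≃ₗ[ℝ] V) (s t : ι) (m j : ℕ) :
    ∃ l : List ι, l.length = j ∧ alt r s t (m + j) = wd r l * alt r s t m := by
  induction j with
  | zero => exact ⟨[], rfl, by simp [wd]⟩
  | succ k ih =>
    obtain ⟨l, h1, h2⟩ := ih
    refine ⟨(if Even (m+k) then t else s) :: l, by simp [h1], ?_⟩
    rw [← add_assoc, alt_left, h2]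
    simp [wd, mul_assoc]

/-- Chebyshev-like sequence -/
def pp (c : ℝ) : ℕ → ℝ
  | 0 => 0
  | 1 => 1
  | (n+2) => 2 * c * pp c (n+1) - pp c n

lemma pp_big {c : ℝ} (hc : 1 ≤ c) (n : ℕ) : 0 ≤ pp c n ∧ pp c n ≤ pp c (n+1) := by
  induction n with
  | zero => simp [pp]
  | succ n ih =>
    obtain ⟨h1, h2⟩ := ih
    refine ⟨h1.trans h2, ?_⟩
    rw [pp]
    nlinarith

lemma pp_sin (θ : ℝ) (n : ℕ) : pp (Real.cos θ) n * Real.sin θ = Real.sin (n * θ) ∧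
    pp (Real.cos θ) (n+1) * Real.sin θ = Real.sin ((n+1) * θ) := by
  induction n with
  | zero => simp [pp]
  | succ n ih =>
    obtain ⟨h1, h2⟩ := ih
    push_cast
    refine ⟨h2, ?_⟩
    rw [pp, sub_mul, h1]
    have e1 : ((n:ℝ) + 1 + 1) * θ = (n+1) * θ + θ := by ring
    have e2 : (n:ℝ) * θ = (n+1) * θ - θ := by ring
    rw [e1, e2, Real.sin_add, Real.sin_sub, mul_assoc, h2]
    ring

section core
variable (B : LinearMap.BilinForm ℝ V) (Δ : Module.Basis ι ℝ V) (r : ι → V ≃ₗ[ℝ] V)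
    (hsymm : ∀ u v : V, B u v = B v u)
    (hdiag : ∀ i : ι, B (Δ i) (Δ i) = 1)
    (hr : ∀ i u, r i u = u - (2 * B (Δ i) u) • Δ i)

include hdiag hr

lemma r_self (i : ι) : r i (Δ i) = - Δ i := by
  rw [hr, hdiag]; module

lemma r_sq (i : ι) : r i * r i = 1 := by
  ext u
  simp only [LinearEquiv.mul_apply, LinearEquiv.coe_one, id]
  rw [hr, hr]
  simp only [map_sub, map_smul, hdiag, smul_eq_mul]
  module

lemma alt_apply (s t : ι) (k : ℕ) (hst : B (Δ t) (Δ s) = B (Δ s) (Δ t)) :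
    (alt r s t k (Δ s) = if Even k then pp (-B (Δ s) (Δ t)) (k+1) • Δ s + pp (-B (Δ s) (Δ t)) k • Δ t
      else pp (-B (Δ s) (Δ t)) (k+1) • Δ t + pp (-B (Δ s) (Δ t)) k • Δ s) ∧ 
    (alt r t s k (Δ t) = if Even k then pp (-B (Δ s) (Δ t)) (k+1) • Δ t + pp (-B (Δ s) (Δ t)) k • Δ s
      else pp (-B (Δ s) (Δ t)) (k+1) • Δ s + pp (-B (Δ s) (Δ t)) k • Δ t) := by
  induction k using Nat.strong_induction_on with
  | _ k ih =>
    match k, ih with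
    | 0, _ => simp [alt, pp]
    | 1, _ =>
      simp only [alt, LinearEquiv.mul_apply, LinearEquiv.coe_one, id, hr, hst]
      simp [pp]
      constructor <;> module
    | k+2, ih =>
      obtain ⟨f1, g1⟩ := ih (k+1) (by omega)
      obtain ⟨f0, g0⟩ := ih k (by omega)
      have e1 : alt r s t (k+2) (Δ s) = -(2 * B (Δ s) (Δ t)) • alt r t s (k+1) (Δ t)
          - alt r s t k (Δ s) := by
        rw [alt]
        simp only [LinearEquiv.mul_apply]
        rw [hr, map_sub, map_smul, hst]
        have : alt r t s (k+1) (Δ s) = - alt r s t k (Δ s) := by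
          rw [alt]; simp only [LinearEquiv.mul_apply]; rw [r_self B Δ r hdiag hr, map_neg]
        rw [this]; module
      have e2 : alt r t s (k+2) (Δ t) = -(2 * B (Δ s) (Δ t)) • alt r s t (k+1) (Δ s)
          - alt r t s k (Δ t) := by
        rw [alt]
        simp only [LinearEquiv.mul_apply]
        rw [hr, map_sub, map_smul]
        have : alt r s t (k+1) (Δ t) = - alt r t s k (Δ t) := by
          rw [alt]; simp only [LinearEquiv.mul_apply]; rw [r_self B Δ r hdiag hr, map_neg]
        rw [this]; module
      rw [e1, e2, f1, g1, f0, g0]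
      by_cases h : Even k
      · simp only [h, Nat.even_add_one, not_true, not_false_iff, if_true, if_false, pp]
        constructor <;> module
      · simp only [h, Nat.even_add_one, not_true, not_false_iff, if_true, if_false, pp]
        constructor <;> module

omit hdiag in
lemma alt_fix (v : V) (k : ℕ) : ∀ s t : ι, B (Δ s) v = 0 → B (Δ t) v = 0 → alt r s t k v = v := by
  induction k with
  | zero => intro s t _ _; simp [alt]
  | succ k ih =>
    intro s t h1 h2
    rw [alt, LinearEquiv.mul_apply, hr, h2]
    simpa using ih t s h2 h1

lemma braid (s t : ι) (hst : B (Δ t) (Δ s) = B (Δ s) (Δ t)) (m : ℕ) (hm : 2 ≤ m)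
    (hB : B (Δ s) (Δ t) = -Real.cos (Real.pi / (m : ℝ))) : alt r s t m = alt r t s m := by
  have hm' : (2:ℝ) ≤ m := by exact_mod_cast hm
  have hpi := Real.pi_pos
  have hθ0 : 0 < Real.pi / m := by positivity
  have hmt : m * (Real.pi / m) = Real.pi := by field_simp
  have hθ1 : Real.pi / m < Real.pi := by nlinarith
  have hs : 0 < Real.sin (Real.pi / m) := Real.sin_pos_of_pos_of_lt_pi hθ0 hθ1
  set θ := Real.pi / m with hθ
  obtain ⟨n, rfl⟩ : ∃ n, m = n + 1 := ⟨m - 1, by omega⟩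
  have p1 : pp (Real.cos θ) (n+1) = 0 := by
    have := (pp_sin θ (n+1)).1
    rw [hmt, Real.sin_pi] at this
    exact (mul_eq_zero.1 this).resolve_right hs.ne'
  have p0 : pp (Real.cos θ) n = 1 := by
    have := (pp_sin θ n).1
    have e : (n:ℝ) * θ = Real.pi - θ := by push_cast at hmt; linarith
    rw [e, Real.sin_pi_sub] at this
    exact mul_right_cancel₀ hs.ne' (this.trans (one_mul _).symm)
  have p2 : pp (Real.cos θ) (n+2) = -1 := by rw [pp, p1, p0]; ring
  have hc : -B (Δ s) (Δ t) = Real.cos θ := by rw [hB]; ring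
  have hA := alt_apply B Δ r hdiag hr s t (n+1) hst
  have hA' := alt_apply B Δ r hdiag hr s t n hst
  rw [hc] at hA hA'
  have ea : alt r s t (n+1) (Δ s) = alt r t s (n+1) (Δ s) := by
    rw [hA.1, alt, LinearEquiv.mul_apply, r_self B Δ r hdiag hr, map_neg, hA'.1, p2, p1, p0]
    by_cases h : Even n <;> simp [h, Nat.even_add_one]
  have eb : alt r s t (n+1) (Δ t) = alt r t s (n+1) (Δ t) := by
    rw [hA.2, alt, LinearEquiv.mul_apply, r_self B Δ r hdiag hr, map_neg, hA'.2, p2, p1, p0]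
    by_cases h : Even n <;> simp [h, Nat.even_add_one]
  ext v
  set c := B (Δ s) (Δ t) with hcd
  have hd : 1 - c^2 ≠ 0 := by
    rw [hB]; have := Real.sin_sq_add_cos_sq θ
    nlinarith
  set x := (B (Δ s) v - c * B (Δ t) v) / (1 - c^2) with hx
  set y := (B (Δ t) v - c * B (Δ s) v) / (1 - c^2) with hy
  have f1 : B (Δ s) (v - x • Δ s - y • Δ t) = 0 := by
    simp only [map_sub, map_smul, hdiag, smul_eq_mul, ← hcd]
    rw [hx, hy]; field_simp; ring
  have f2 : B (Δ t) (v - x • Δ s - y • Δ t) = 0 := by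
    simp only [map_sub, map_smul, hdiag, smul_eq_mul, hst]
    rw [hx, hy]; field_simp; ring
  have e1 := alt_fix B Δ r hr _ (n+1) s t f1 f2
  have e2 := alt_fix B Δ r hr _ (n+1) t s f2 f1
  have e1 := e1.trans e2.symm
  simp only [map_sub, map_smul, ea, eb] at e1
  exact sub_left_injective (sub_left_injective e1)

include hsymm
variable (hoff : ∀ i j : ι, i ≠ j → B (Δ i) (Δ j) ≤ -1 ∨
      ∃ k : ℕ, 2 ≤ k ∧ B (Δ i) (Δ j) = -Real.cos (Real.pi / (k : ℝ)))
include hoff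

lemma alt_cone (v : V ≃ₗ[ℝ] V) (hv : isW r v) (s t : ι) (hst : s ≠ t) (k : ℕ)
    (hk : len r v + k = len r (v * alt r s t k))
    (hs : len r (v * alt r s t k) ≤ len r (v * alt r s t k * r s))
    (h1 : ∀ j, 0 ≤ Δ.repr (v (Δ s)) j) (h2 : ∀ j, 0 ≤ Δ.repr (v (Δ t)) j) :
    ∀ j, 0 ≤ Δ.repr ((v * alt r s t k) (Δ s)) j := by
  have hpos : 0 ≤ pp (-B (Δ s) (Δ t)) k ∧ 0 ≤ pp (-B (Δ s) (Δ t)) (k+1) := by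
    rcases hoff s t hst with h | ⟨m, hm, hB⟩
    · exact ⟨(pp_big (by linarith) k).1, (pp_big (by linarith) (k+1)).1⟩
    · have hkm : k < m := by
        by_contra hcon
        obtain ⟨j, rfl⟩ : ∃ j, k = m + j := ⟨k - m, by omega⟩
        obtain ⟨n, rfl⟩ : ∃ n, m = n + 1 := ⟨m - 1, by omega⟩
        obtain ⟨l, hl, hl'⟩ := alt_add r s t (n+1) j
        obtain ⟨l2, hl2, hl2'⟩ := alt_word r n s t
        have : v * alt r s t (n+1+j) * r s = v * wd r (l ++ l2) := by
          rw [hl', braid B Δ r hdiag hr s t (hsymm _ _) (n+1) hm hB, wd_append, hl2', alt]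
          simp only [mul_assoc]
          rw [r_sq B Δ r hdiag hr, mul_one]
        rw [this] at hs
        have := len_mul r hv (l ++ l2)
        simp only [List.length_append] at this
        omega
      have hc : -B (Δ s) (Δ t) = Real.cos (Real.pi / m) := by rw [hB]; ring
      rw [hc]
      have hm' : (2:ℝ) ≤ m := by exact_mod_cast hm
      have hpi := Real.pi_pos
      have hθ0 : 0 < Real.pi / m := by positivity
      have hmt : m * (Real.pi / m) = Real.pi := by field_simp
      have hθ1 : Real.pi / m < Real.pi := by nlinarith
      have hs : 0 < Real.sin (Real.pi / m) := Real.sin_pos_of_pos_of_lt_pi hθ0 hθ1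
      have hk' : (k:ℝ) + 1 ≤ m := by exact_mod_cast hkm
      obtain ⟨q1, q2⟩ := pp_sin (Real.pi / m) k
      constructor
      · refine nonneg_of_mul_nonneg_left ?_ hs
        rw [q1]
        apply Real.sin_nonneg_of_nonneg_of_le_pi (by positivity)
        nlinarith
      · refine nonneg_of_mul_nonneg_left ?_ hs
        rw [q2]
        apply Real.sin_nonneg_of_nonneg_of_le_pi (by positivity)
        nlinarith
  intro j
  rw [LinearEquiv.mul_apply, (alt_apply B Δ r hdiag hr s t k (hsymm _ _)).1]
  have := h1 j
  have := h2 j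
  obtain ⟨p0, p1⟩ := hpos
  split_ifs <;> simp only [map_add, map_smul, Finsupp.add_apply, Finsupp.smul_apply, smul_eq_mul] <;>
    positivity

lemma tits (n : ℕ) : ∀ (w : V ≃ₗ[ℝ] V) (s : ι), isW r w → len r w = n →
    len r w ≤ len r (w * r s) → ∀ j, 0 ≤ Δ.repr (w (Δ s)) j := by
  classical
  induction n using Nat.strong_induction_on with
  | _ n ih =>
    intro w s hw hn hs
    have inner : ∀ (t : ι), s ≠ t → ∀ (d : ℕ) (v : V ≃ₗ[ℝ] V) (k : ℕ), len r v = d → isW r v →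
        1 ≤ k → len r v + k = len r w → w = v * alt r s t k → ∀ j, 0 ≤ Δ.repr (w (Δ s)) j := by
      intro t hst d
      induction d using Nat.strong_induction_on with
      | _ d ih2 =>
        intro v k hd hv hk hlen hwv
        obtain ⟨k, rfl⟩ : ∃ k', k = k' + 1 := ⟨k - 1, by omega⟩
        have hx : len r v ≤ len r (v * r (if Even k then t else s)) := by
          obtain ⟨l, hl, hl'⟩ := alt_word r k s t
          have := len_mul r (isW_mul r hv (isW_r r (if Even k then t else s))) l
          rw [hl', mul_assoc, ← alt_left, ← hwv] at this
          omega
        by_cases hy : len r v ≤ len r (v * r (if Even (k+1) then t else s))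
        · have hxy : len r v ≤ len r (v * r s) ∧ len r v ≤ len r (v * r t) := by
            by_cases h : Even k
            · simp [h, Nat.even_add_one] at hx hy; exact ⟨hy, hx⟩
            · simp [h, Nat.even_add_one] at hx hy; exact ⟨hx, hy⟩
          have h1 := ih (len r v) (by omega) v s hv rfl hxy.1
          have h2 := ih (len r v) (by omega) v t hv rfl hxy.2
          rw [hwv] at hlen hs ⊢
          exact alt_cone B Δ r hsymm hdiag hr hoff v hv s t hst (k+1) hlen hs h1 h2
        · set y := (if Even (k+1) then t else s) with hyd
          have hw' : w = (v * r y) * alt r s t (k+1+1) := by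
            rw [alt_left, ← hyd, mul_assoc, ← mul_assoc (r y), r_sq B Δ r hdiag hr, one_mul, hwv]
          have hvy := isW_mul r hv (isW_r r y)
          refine ih2 (len r (v * r y)) (by omega) (v * r y) (k+1+1) rfl hvy (by omega) ?_ hw'
          obtain ⟨l, hl, hl'⟩ := alt_word r (k+1+1) s t
          have := len_mul r hvy l
          rw [hl', ← hw'] at this
          omega
    obtain ⟨l, hl, hl'⟩ := exists_len r hw
    rcases List.eq_nil_or_concat l with rfl | ⟨l', t, rfl⟩
    · have : w = 1 := by rw [← hl']; simp [wd]
      subst this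
      intro j
      simp only [LinearEquiv.coe_one, id, Module.Basis.repr_self, Finsupp.single_apply]
      split_ifs <;> norm_num
    · rw [List.concat_eq_append] at hl hl'
      rw [wd_append] at hl'
      have ht : wd r [t] = r t := by simp [wd]
      simp only [List.length_append, List.length_singleton] at hl
      have hv : isW r (wd r l') := ⟨l', rfl⟩
      have a1 := len_wd r l'
      have a2 := len_mul r hv [t]
      rw [hl'] at a2
      simp only [List.length_singleton] at a2
      rw [ht] at hl'
      have hst : s ≠ t := by
        rintro rfl
        rw [← hl', mul_assoc, r_sq B Δ r hdiag hr, mul_one, hl'] at hs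
        omega
      exact inner t hst _ (wd r l') 1 rfl hv le_rfl (by omega) (by simp [alt, hl'])

lemma root_sign (w : V ≃ₗ[ℝ] V) (hw : isW r w) (s : ι) :
    (∀ j, 0 ≤ Δ.repr (w (Δ s)) j) ∨ (∀ j, Δ.repr (w (Δ s)) j ≤ 0) := by
  by_cases h : len r w ≤ len r (w * r s)
  · exact Or.inl (tits B Δ r hsymm hdiag hr hoff _ w s hw rfl h)
  · right
    have := tits B Δ r hsymm hdiag hr hoff _ (w * r s) s (isW_mul r hw (isW_r r s)) rfl
      (by rw [mul_assoc, r_sq B Δ r hdiag hr, mul_one]; omega)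
    intro j
    have := this j
    rw [LinearEquiv.mul_apply, r_self B Δ r hdiag hr] at this
    simpa using this

lemma eq_one (w : V ≃ₗ[ℝ] V) (hw : isW r w) (h : ∀ i, 0 < Δ.repr (w (Δ i)) i) : w = 1 := by
  obtain ⟨l, hl, hl'⟩ := exists_len r hw
  rcases List.eq_nil_or_concat l with rfl | ⟨l', t, rfl⟩
  · rw [← hl']; simp [wd]
  · exfalso
    rw [List.concat_eq_append] at hl hl'
    rw [wd_append] at hl'
    have ht : wd r [t] = r t := by simp [wd]
    simp only [List.length_append, List.length_singleton] at hl
    have hv : isW r (wd r l') := ⟨l', rfl⟩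
    have a1 := len_wd r l'
    rw [ht] at hl'
    have := tits B Δ r hsymm hdiag hr hoff _ (wd r l') t hv rfl (by rw [hl']; omega) t
    have h2 := h t
    rw [← hl', LinearEquiv.mul_apply, r_self B Δ r hdiag hr] at h2
    simp at h2
    linarith

omit hsymm hoff in
lemma mem_cox (w : V ≃ₗ[ℝ] V) (hw : w ∈ cox B Δ) : isW r w := by
  have hinv : ∀ i, (r i)⁻¹ = r i := fun i => inv_eq_of_mul_eq_one_left (r_sq B Δ r hdiag hr i)
  unfold cox at hw
  induction hw using Subgroup.closure_induction with
  | mem x hx =>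
    obtain ⟨i, hi⟩ := hx
    have : x = r i := by
      ext u; rw [hi, hr, hdiag, div_one]
    rw [this]; exact isW_r r i
  | one => exact ⟨[], by simp [wd]⟩
  | mul x y _ _ hx hy => exact isW_mul r hx hy
  | inv x _ hx =>
    obtain ⟨l, rfl⟩ := hx
    refine ⟨l.reverse, ?_⟩
    unfold wd
    rw [List.prod_inv_reverse, List.map_map, List.map_reverse]
    congr 2
    apply List.map_congr_left
    intro i _
    simp [hinv]

omit hdiag hoff in
lemma inv_B (hdiag : ∀ i : ι, B (Δ i) (Δ i) = 1) (w : V ≃ₗ[ℝ] V) (hw : isW r w) (x y : V) :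
    B (w x) (w y) = B x y := by
  obtain ⟨l, rfl⟩ := hw
  induction l with
  | nil => simp [wd]
  | cons i l ih =>
    have : wd r (i :: l) = r i * wd r l := by simp [wd]
    rw [this, LinearEquiv.mul_apply, LinearEquiv.mul_apply, ← ih]
    rw [hr, hr]
    simp only [map_sub, map_smul, LinearMap.sub_apply, LinearMap.smul_apply, smul_eq_mul, hdiag]
    rw [hsymm (wd r l x) (Δ i)]
    ring

omit hoff in
lemma isW_inv (w : V ≃ₗ[ℝ] V) (hw : isW r w) : isW r w⁻¹ := by
  have hinv : ∀ i, (r i)⁻¹ = r i := fun i => inv_eq_of_mul_eq_one_left (r_sq B Δ r hdiag hr i)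
  obtain ⟨l, rfl⟩ := hw
  refine ⟨l.reverse, ?_⟩
  unfold wd
  rw [List.prod_inv_reverse, List.map_map, List.map_reverse]
  congr 2
  apply List.map_congr_left
  intro i _
  simp [hinv]

omit hoff in
/-- reflections in roots belong to the group -/
lemma root_refl (ρ : V) (hρ : ρ ∈ Phi B Δ) :
    B ρ ρ = 1 ∧ ∃ g, isW r g ∧ ∀ u, g u = u - (2 * B ρ u) • ρ := by
  obtain ⟨w, hw, i, rfl⟩ := hρ
  have hw' := mem_cox B Δ r hdiag hr w hw
  refine ⟨by rw [inv_B B Δ r hsymm hr hdiag w hw', hdiag], w * r i * w⁻¹,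
    isW_mul r (isW_mul r hw' (isW_r r i)) (isW_inv B Δ r hsymm hdiag hr w hw'), ?_⟩
  intro u
  have h1 : w (w⁻¹ u) = u := by rw [← LinearEquiv.mul_apply]; simp
  rw [LinearEquiv.mul_apply, LinearEquiv.mul_apply, hr, map_sub, map_smul]
  have : B (w (Δ i)) u = B (Δ i) (w⁻¹ u) := by
    rw [← inv_B B Δ r hsymm hr hdiag w hw' (Δ i), h1]
  rw [this, h1]

/-- two close roots are equal -/
lemma close_eq (x y : V) (hx : x ∈ Phi B Δ) (hy : y ∈ Phi B Δ) (hxy : 0 < B x y)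
    (h : ∀ i, 0 < Δ.repr ((Δ i - (2 * B y (Δ i)) • y) -
      (2 * B x (Δ i - (2 * B y (Δ i)) • y)) • x) i) : x = y := by
  obtain ⟨bx, g, hg, hg'⟩ := root_refl B Δ r hsymm hdiag hr x hx
  obtain ⟨by', k, hk, hk'⟩ := root_refl B Δ r hsymm hdiag hr y hy
  have h1 := eq_one B Δ r hsymm hdiag hr hoff (g * k) (isW_mul r hg hk) (by
    intro i
    rw [LinearEquiv.mul_apply, hg', hk']
    exact h i)
  have h2 : g (k y) = y := by rw [← LinearEquiv.mul_apply, h1]; simp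
  have h3 : k y = -y := by rw [hk', by']; module
  rw [h3, map_neg, hg'] at h2
  have h4 : y = (B x y) • x := by
    have : (2:ℝ) • y = (2:ℝ) • ((B x y) • x) := by
      have : (2:ℝ) • y = y + y := two_smul _ _
      rw [this]; nth_rewrite 1 [← h2]; module
    exact smul_right_injective V (two_ne_zero (α := ℝ)) this
  have h5 : B x y * B x y = 1 := by
    have := by'
    rw [h4] at this
    simp only [map_smul, LinearMap.smul_apply, smul_eq_mul, bx, mul_one] at this
    exact this
  have h6 : B x y = 1 := by nlinarith
  rw [h6, one_smul] at h4
  exact h4.symm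

end core

lemma cont_B (B : LinearMap.BilinForm ℝ V) (Δ : Module.Basis ι ℝ V) :
    Continuous (fun p : V × V => B p.1 p.2) := by
  have : FiniteDimensional ℝ V := Δ.finiteDimensional_of_finite
  have e : (fun p : V × V => B p.1 p.2) = fun p => ∑ i, Δ.coord i p.1 * B (Δ i) p.2 := by
    funext p
    conv_lhs => rw [← Δ.sum_repr p.1]
    simp only [map_sum, map_smul, LinearMap.sum_apply, LinearMap.smul_apply, smul_eq_mul,
      Module.Basis.coord_apply]
  rw [e]
  refine continuous_finsetSum _ fun i _ => ?_
  exact ((Δ.coord i).continuous_of_finiteDimensional.comp continuous_fst).mul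
    ((B (Δ i)).continuous_of_finiteDimensional.comp continuous_snd)

lemma N_cont (Δ : Module.Basis ι ℝ V) (N : Seminorm ℝ V) : Continuous N := by
  have : FiniteDimensional ℝ V := Δ.finiteDimensional_of_finite
  have := N.convexOn.continuousOn isOpen_univ
  rwa [continuousOn_univ] at this

lemma N_compact (Δ : Module.Basis ι ℝ V) (N : Seminorm ℝ V) (hN : ∀ v : V, N v = 0 → v = 0)
    (M : ℝ) : IsCompact {v | N v ≤ M} := by
  have : FiniteDimensional ℝ V := Δ.finiteDimensional_of_finite
  have : ProperSpace V := FiniteDimensional.proper ℝ V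
  have hc := N_cont Δ N
  have hlow : ∃ c : ℝ, 0 < c ∧ ∀ v, c * ‖v‖ ≤ N v := by
    rcases (Metric.sphere (0:V) 1).eq_empty_or_nonempty with he | hne
    · refine ⟨1, one_pos, fun v => ?_⟩
      by_cases hv : v = 0
      · simp [hv]
      · exfalso
        have : ‖v‖⁻¹ • v ∈ Metric.sphere (0:V) 1 := by
          simp [norm_smul, hv]
        rw [he] at this; exact this
    · obtain ⟨z, hz, hmin⟩ := (isCompact_sphere (0:V) 1).exists_isMinOn hne hc.continuousOn
      have hz0 : z ≠ 0 := by rintro rfl; simp at hz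
      refine ⟨N z, lt_of_le_of_ne (apply_nonneg N z) (fun h => hz0 (hN z h.symm)), fun v => ?_⟩
      by_cases hv : v = 0
      · simp [hv]
      · have hm : ‖v‖⁻¹ • v ∈ Metric.sphere (0:V) 1 := by
          simp [norm_smul, hv]
        have := hmin hm
        simp only [Set.mem_ofPred_eq, map_smul_eq_mul, norm_inv, norm_norm] at this
        have hp : 0 < ‖v‖ := norm_pos_iff.2 hv
        rw [inv_mul_eq_div, le_div_iff₀ hp] at this
        exact this
  obtain ⟨c, hc0, hcv⟩ := hlow
  refine Metric.isCompact_of_isClosed_isBounded (isClosed_le hc continuous_const) ?_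
  refine (Metric.isBounded_closedBall (x := (0:V)) (r := M / c)).subset fun v hv => ?_
  simp only [Metric.mem_closedBall, dist_zero_right]
  rw [le_div_iff₀ hc0]
  have := hcv v
  have hv : N v ≤ M := hv
  linarith

lemma N_le (Δ : Module.Basis ι ℝ V) (N : Seminorm ℝ V) (v : V) (hv : ∀ i, 0 ≤ Δ.repr v i) :
    N v ≤ l1 Δ v * ∑ i, N (Δ i) := by
  conv_lhs => rw [← Δ.sum_repr v]
  refine (Finset.le_sum_of_subadditive N (map_zero N).le (map_add_le_add N) _ _).trans ?_
  unfold l1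
  rw [Finset.sum_mul]
  refine Finset.sum_le_sum fun i _ => ?_
  rw [map_smul_eq_mul, Real.norm_of_nonneg (hv i)]
  exact mul_le_mul_of_nonneg_left
    (Finset.single_le_sum (f := fun i => N (Δ i)) (fun j _ => apply_nonneg N _) (Finset.mem_univ i)) (hv i)

/-- For any norm on `V`: (i) for every `M ≥ 0` the set of roots of norm at most `M` is
finite; (ii) for every `ε > 0` the set of positive roots whose normalization is at
distance at least `ε` from `Q̂ = Q ∩ V₁` is finite. -/
theorem statement5 (B : LinearMap.BilinForm ℝ V) (Δ : Module.Basis ι ℝ V)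
    (hsymm : ∀ u v : V, B u v = B v u)
    (hdiag : ∀ i : ι, B (Δ i) (Δ i) = 1)
    (hoff : ∀ i j : ι, i ≠ j → B (Δ i) (Δ j) ≤ -1 ∨
      ∃ k : ℕ, 2 ≤ k ∧ B (Δ i) (Δ j) = -Real.cos (Real.pi / (k : ℝ)))
    (N : Seminorm ℝ V) (hN : ∀ v : V, N v = 0 → v = 0) :
    (∀ M : ℝ, 0 ≤ M → Set.Finite { ρ ∈ Phi B Δ | N ρ ≤ M }) ∧
    (∀ ε : ℝ, 0 < ε → Set.Finite
      { ρ ∈ posPhi B Δ | ∀ y ∈ isoQ B ∩ { v : V | l1 Δ v = 1 }, ε ≤ N (nrm Δ ρ - y) }) := by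
  classical
  have : FiniteDimensional ℝ V := Δ.finiteDimensional_of_finite
  have hBc := cont_B B Δ
  have hNc := N_cont Δ N
  obtain ⟨r, hr⟩ : ∃ r : ι → V ≃ₗ[ℝ] V, ∀ i u, r i u = u - (2 * B (Δ i) u) • Δ i := by
    have hx : ∀ i, ((2:ℝ) • B (Δ i)) (Δ i) = 2 := by
      intro i; simp [hdiag]
    refine ⟨fun i => Module.reflection (x := Δ i) (f := (2:ℝ) • B (Δ i)) (hx i), fun i u => ?_⟩
    show Module.reflection (hx i) u = _
    rw [Module.reflection_apply]; simp
  have part1 : ∀ M : ℝ, Set.Finite { ρ ∈ Phi B Δ | N ρ ≤ M } := by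
    intro M
    have hK : IsCompact ({v | N v ≤ M} ∩ {v | B v v = 1}) := by
      refine (N_compact Δ N hN M).inter_right ?_
      exact isClosed_eq (hBc.comp (continuous_id.prodMk continuous_id)) continuous_const
    have key : ({ρ | ρ ∈ Phi B Δ ∧ ρ ∈ ({v | N v ≤ M} ∩ {v | B v v = 1})}).Finite := by
      refine hK.induction_on (p := fun s => {ρ | ρ ∈ Phi B Δ ∧ ρ ∈ s}.Finite) (by simp) ?_ ?_ ?_
      · intro s t hst ht
        exact ht.subset fun ρ hρ => ⟨hρ.1, hst hρ.2⟩
      · intro s t hs ht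
        exact (hs.union ht).subset fun ρ hρ => hρ.2.elim (fun h => Or.inl ⟨hρ.1, h⟩)
          (fun h => Or.inr ⟨hρ.1, h⟩)
      · rintro x ⟨_, hx⟩
        have hx : B x x = 1 := hx
        have hF : ∀ i, Continuous (fun p : V × V => Δ.repr ((Δ i - (2 * B p.2 (Δ i)) • p.2) -
            (2 * B p.1 (Δ i - (2 * B p.2 (Δ i)) • p.2)) • p.1) i) := by
          intro i
          have c1 : Continuous (fun p : V × V => Δ i - (2 * B p.2 (Δ i)) • p.2) := by
            have : Continuous (fun p : V × V => B p.2 (Δ i)) :=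
              hBc.comp (continuous_snd.prodMk continuous_const)
            fun_prop
          have c2 : Continuous (fun p : V × V => B p.1 (Δ i - (2 * B p.2 (Δ i)) • p.2)) :=
            hBc.comp (continuous_fst.prodMk c1)
          have c3 : Continuous (fun p : V × V => (Δ i - (2 * B p.2 (Δ i)) • p.2) -
            (2 * B p.1 (Δ i - (2 * B p.2 (Δ i)) • p.2)) • p.1) := by fun_prop
          exact (Δ.coord i).continuous_of_finiteDimensional.comp c3
        have hev : ∀ᶠ p : V × V in 𝓝 (x, x), 0 < B p.1 p.2 ∧
            ∀ i, 0 < Δ.repr ((Δ i - (2 * B p.2 (Δ i)) • p.2) -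
            (2 * B p.1 (Δ i - (2 * B p.2 (Δ i)) • p.2)) • p.1) i := by
          refine Filter.Eventually.and ?_ (Filter.eventually_all.2 fun i => ?_)
          · exact hBc.continuousAt.eventually (lt_mem_nhds (by simp [hx]))
          · refine (hF i).continuousAt.eventually (lt_mem_nhds ?_)
            have : (Δ i - (2 * B x (Δ i)) • x) - (2 * B x (Δ i - (2 * B x (Δ i)) • x)) • x = Δ i := by
              simp only [map_sub, map_smul, hx, smul_eq_mul]; module
            simp only [this]; simp
        rw [nhds_prod_eq, Filter.eventually_prod_self_iff'] at hev
        obtain ⟨U, hU, hU'⟩ := hev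
        refine ⟨U, mem_nhdsWithin_of_mem_nhds hU, Set.Subsingleton.finite ?_⟩
        rintro a ⟨ha, haU⟩ b ⟨hb, hbU⟩
        obtain ⟨h1, h2⟩ := hU' a haU b hbU
        exact close_eq B Δ r hsymm hdiag hr hoff a b ha hb h1 h2
    refine key.subset ?_
    rintro ρ ⟨h1, h2⟩
    exact ⟨h1, h2, (root_refl B Δ r hsymm hdiag hr ρ h1).1⟩
  refine ⟨fun M _ => part1 M, fun ε hε => ?_⟩
  set S := { ρ ∈ posPhi B Δ | ∀ y ∈ isoQ B ∩ { v : V | l1 Δ v = 1 }, ε ≤ N (nrm Δ ρ - y) } with hS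
  set C := ∑ i, N (Δ i) with hC
  have hC0 : 0 ≤ C := Finset.sum_nonneg fun i _ => apply_nonneg N _
  have hl1 : Continuous (l1 Δ) := by
    unfold l1
    exact continuous_finsetSum _ fun i _ => (Δ.coord i).continuous_of_finiteDimensional
  have hK : IsCompact ({v | N v ≤ C} ∩ {v | (∀ i, 0 ≤ Δ.repr v i) ∧ l1 Δ v = 1}) := by
    refine (N_compact Δ N hN C).inter_right ?_
    have e : {v | (∀ i, 0 ≤ Δ.repr v i) ∧ l1 Δ v = 1} =
        (⋂ i, {v | 0 ≤ Δ.coord i v}) ∩ {v | l1 Δ v = 1} := by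
      ext v; simp
    rw [e]
    refine IsClosed.inter ?_ (isClosed_eq hl1 continuous_const)
    exact isClosed_iInter fun i => isClosed_le continuous_const
      (Δ.coord i).continuous_of_finiteDimensional
  have hpos : ∀ ρ ∈ posPhi B Δ, 0 < l1 Δ ρ := by
    rintro ρ ⟨h1, h2⟩
    refine lt_of_le_of_ne (Finset.sum_nonneg fun i _ => h2 i) fun h => ?_
    have h0 := (Finset.sum_eq_zero_iff_of_nonneg fun i _ => h2 i).1 h.symm
    have : ρ = 0 := by
      apply Δ.repr.injective
      ext i
      simpa using h0 i (Finset.mem_univ i)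
    have hb := (root_refl B Δ r hsymm hdiag hr ρ h1).1
    rw [this] at hb
    simp at hb
  have key : ({ρ | ρ ∈ S ∧ nrm Δ ρ ∈
      ({v | N v ≤ C} ∩ {v | (∀ i, 0 ≤ Δ.repr v i) ∧ l1 Δ v = 1})}).Finite := by
    refine hK.induction_on (p := fun s => {ρ | ρ ∈ S ∧ nrm Δ ρ ∈ s}.Finite) (by simp) ?_ ?_ ?_
    · intro s t hst ht
      exact ht.subset fun ρ hρ => ⟨hρ.1, hst hρ.2⟩
    · intro s t hs ht
      exact (hs.union ht).subset fun ρ hρ => hρ.2.elim (fun h => Or.inl ⟨hρ.1, h⟩)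
        (fun h => Or.inr ⟨hρ.1, h⟩)
    · rintro y ⟨_, hy0, hy1⟩
      by_cases hq : B y y = 0
      · refine ⟨{z | N (z - y) < ε}, mem_nhdsWithin_of_mem_nhds ?_, ?_⟩
        · refine (isOpen_lt (hNc.comp (continuous_id.sub continuous_const))
            continuous_const).mem_nhds ?_
          simpa using hε
        · convert Set.finite_empty
          ext ρ
          simp only [Set.mem_ofPred_eq, Set.mem_empty_iff_false, iff_false, not_and, not_lt]
          intro hρ
          exact hρ.2 y ⟨hq, hy1⟩
      · have hc : 0 < |B y y| := abs_pos.2 hq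
        refine ⟨{z | |B y y| / 2 < |B z z|}, mem_nhdsWithin_of_mem_nhds ?_, ?_⟩
        · refine (isOpen_lt continuous_const
            (hBc.comp (continuous_id.prodMk continuous_id)).abs).mem_nhds ?_
          simp only [Set.mem_ofPred_eq, Function.comp, id]
          linarith
        · refine (part1 ((1 + 2 / |B y y|) * C)).subset ?_
          rintro ρ ⟨hρS, hρ⟩
          refine ⟨hρS.1.1, (N_le Δ N ρ hρS.1.2).trans (mul_le_mul_of_nonneg_right ?_ hC0)⟩
          have hp := hpos ρ hρS.1
          have hb := (root_refl B Δ r hsymm hdiag hr ρ hρS.1.1).1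
          simp only [Set.mem_ofPred_eq, nrm, map_smul, LinearMap.smul_apply, smul_eq_mul, hb,
            mul_one] at hρ
          rw [abs_of_pos (mul_pos (inv_pos.2 hp) (inv_pos.2 hp))] at hρ
          set L := l1 Δ ρ
          set c := |B y y|
          have h1 : c / 2 * (L * L) < 1 := by
            have := mul_lt_mul_of_pos_right hρ (mul_pos hp hp)
            have e : L⁻¹ * L⁻¹ * (L * L) = 1 := by field_simp
            rwa [e] at this
          have h2 : L * L < 2 / c := by
            rw [lt_div_iff₀ hc]; linarith
          nlinarith [sq_nonneg (L - 1)]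
  refine key.subset fun ρ hρ => ⟨hρ, ?_⟩
  have hp := hpos ρ hρ.1
  have hn : ∀ i, 0 ≤ Δ.repr (nrm Δ ρ) i := by
    intro i
    have := hρ.1.2 i
    simp only [nrm, map_smul, Finsupp.smul_apply, smul_eq_mul]
    positivity
  have h1 : l1 Δ (nrm Δ ρ) = 1 := by
    have : l1 Δ (nrm Δ ρ) = (l1 Δ ρ)⁻¹ * l1 Δ ρ := by
      conv_lhs => rw [nrm, l1]
      simp only [map_smul, Finsupp.smul_apply, smul_eq_mul, ← Finset.mul_sum]
      rfl
    rw [this, inv_mul_cancel₀ hp.ne']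
  refine ⟨?_, hn, h1⟩
  have := N_le Δ N _ hn
  rw [h1, one_mul] at this
  exact this
end
end

section
/- Suppose Δ is partitioned into two nonempty proper subsets Δ = Δ_I ⊔ Δ_J with B(α,β) = 0 for all α ∈ Δ_I and β ∈ Δ_J. Let W_I be the subgroup generated by {s_α : α∈Δ_I}, Φ_I = W_I·Δ_I, Φ_I⁺ = Φ_I ∩ cone(Δ_I), and E(Φ_I) the set of accumulation points of {ρ̂ : ρ ∈ Φ_I⁺}; define W_J, Φ_J, E(Φ_J) similarly. Then E(Φ) is the disjoint union of E(Φ_I) and E(Φ_J). -/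
open Filter Topology

noncomputable section

variable {ι V : Type*} [Fintype ι] [NormedAddCommGroup V] [NormedSpace ℝ V]

/-- The simple `B`-reflections associated to the simple roots `Δ i` with `i ∈ I`. -/
def simpleReflectionsOn (B : LinearMap.BilinForm ℝ V) (Δ : Module.Basis ι ℝ V) (I : Set ι) :
    Set (V ≃ₗ[ℝ] V) :=
  { e | ∃ i ∈ I, ∀ u : V, e u = u - (2 * B (Δ i) u / B (Δ i) (Δ i)) • Δ i }

/-- The subgroup `W_I` generated by the simple reflections indexed by `I`. -/
def coxOn (B : LinearMap.BilinForm ℝ V) (Δ : Module.Basis ι ℝ V) (I : Set ι) :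
    Subgroup (V ≃ₗ[ℝ] V) :=
  Subgroup.closure (simpleReflectionsOn B Δ I)

/-- The root system `Φ_I = W_I ⬝ Δ_I`. -/
def PhiOn (B : LinearMap.BilinForm ℝ V) (Δ : Module.Basis ι ℝ V) (I : Set ι) : Set V :=
  { ρ | ∃ w ∈ coxOn B Δ I, ∃ i ∈ I, w (Δ i) = ρ }

/-- The positive roots `Φ_I⁺ = Φ_I ∩ cone(Δ_I)`. -/
def posPhiOn (B : LinearMap.BilinForm ℝ V) (Δ : Module.Basis ι ℝ V) (I : Set ι) : Set V :=
  { ρ ∈ PhiOn B Δ I | (∀ i : ι, 0 ≤ Δ.repr ρ i) ∧ ∀ i ∉ I, Δ.repr ρ i = 0 }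

/-- The set `Φ̂_I` of normalized roots of `Φ_I`. -/
def nPhiOn (B : LinearMap.BilinForm ℝ V) (Δ : Module.Basis ι ℝ V) (I : Set ι) : Set V :=
  nrm Δ '' posPhiOn B Δ I

/-- `E(Φ_I)`: the set of accumulation points of the normalized roots of `Φ_I`. -/
def EsetOn (B : LinearMap.BilinForm ℝ V) (Δ : Module.Basis ι ℝ V) (I : Set ι) : Set V :=
  { x | AccPt x (𝓟 (nPhiOn B Δ I)) }

theorem refl_invol (B : LinearMap.BilinForm ℝ V) (Δ : Module.Basis ι ℝ V)
    (hdiag : ∀ i : ι, B (Δ i) (Δ i) = 1) {K : Set ι} {e : V ≃ₗ[ℝ] V}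
    (he : e ∈ simpleReflectionsOn B Δ K) (v : V) : e (e v) = v := by
  obtain ⟨i, hi, h⟩ := he
  rw [h (e v), h v]
  simp only [hdiag, map_sub, map_smul, smul_eq_mul, div_one]
  module

theorem cox_sub_mem (B : LinearMap.BilinForm ℝ V) (Δ : Module.Basis ι ℝ V) (K : Set ι)
    (w : V ≃ₗ[ℝ] V) (hw : w ∈ coxOn B Δ K) :
    ∀ v, w v - v ∈ Submodule.span ℝ (Δ '' K) := by
  unfold coxOn at hw
  induction hw using Subgroup.closure_induction with
  | mem e he =>
    intro v
    obtain ⟨i, hi, h⟩ := he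
    rw [h v, sub_sub_cancel_left]
    exact Submodule.neg_mem _ (Submodule.smul_mem _ _ (Submodule.subset_span ⟨i, hi, rfl⟩))
  | one => intro v; simp
  | mul x y _ _ hx hy =>
    intro v
    have := Submodule.add_mem _ (hx (y v)) (hy v)
    simpa using this
  | inv x _ hx =>
    intro v
    have := Submodule.neg_mem _ (hx (x⁻¹ v))
    have h2 : x (x⁻¹ v) = v := x.apply_symm_apply v
    rw [h2, neg_sub] at this
    exact this

theorem phi_mem_span (B : LinearMap.BilinForm ℝ V) (Δ : Module.Basis ι ℝ V) (K : Set ι)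
    {ρ : V} (h : ρ ∈ PhiOn B Δ K) : ρ ∈ Submodule.span ℝ (Δ '' K) := by
  obtain ⟨w, hw, i, hi, rfl⟩ := h
  have := Submodule.add_mem _ (cox_sub_mem B Δ K w hw (Δ i))
    (Submodule.subset_span ⟨i, hi, rfl⟩)
  simpa using this

theorem repr_zero (Δ : Module.Basis ι ℝ V) (K : Set ι) {ρ : V}
    (h : ρ ∈ Submodule.span ℝ (Δ '' K)) (i : ι) (hi : i ∉ K) : Δ.repr ρ i = 0 := by
  rw [Module.Basis.mem_span_image] at h
  by_contra hne
  exact hi (h (by simpa using hne))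

theorem orth_span (B : LinearMap.BilinForm ℝ V) (Δ : Module.Basis ι ℝ V) (K : Set ι)
    (i : ι) (ho : ∀ j ∈ K, B (Δ i) (Δ j) = 0) {ρ : V}
    (h : ρ ∈ Submodule.span ℝ (Δ '' K)) : B (Δ i) ρ = 0 := by
  have : Submodule.span ℝ (Δ '' K) ≤ LinearMap.ker (B (Δ i)) := by
    rw [Submodule.span_le]
    rintro _ ⟨j, hj, rfl⟩
    exact ho j hj
  exact this h

theorem step_phi (B : LinearMap.BilinForm ℝ V) (Δ : Module.Basis ι ℝ V) (K : Set ι)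
    (ho : ∀ i ∈ Kᶜ, ∀ j ∈ K, B (Δ i) (Δ j) = 0) {e : V ≃ₗ[ℝ] V}
    (he : e ∈ simpleReflectionsOn B Δ Set.univ) {ρ : V} (hρ : ρ ∈ PhiOn B Δ K) :
    e ρ ∈ PhiOn B Δ K := by
  obtain ⟨i, -, h⟩ := he
  by_cases hi : i ∈ K
  · obtain ⟨w, hw, j, hj, rfl⟩ := hρ
    exact ⟨e * w, Subgroup.mul_mem _ (Subgroup.subset_closure ⟨i, hi, h⟩) hw, j, hj, rfl⟩
  · rw [h, orth_span B Δ K i (ho i hi) (phi_mem_span B Δ K hρ)]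
    simpa using hρ

theorem cox_phi (B : LinearMap.BilinForm ℝ V) (Δ : Module.Basis ι ℝ V)
    (hdiag : ∀ i : ι, B (Δ i) (Δ i) = 1) (K : Set ι)
    (ho : ∀ i ∈ Kᶜ, ∀ j ∈ K, B (Δ i) (Δ j) = 0) (w : V ≃ₗ[ℝ] V)
    (hw : w ∈ coxOn B Δ Set.univ) : ∀ ρ, w ρ ∈ PhiOn B Δ K ↔ ρ ∈ PhiOn B Δ K := by
  unfold coxOn at hw
  induction hw using Subgroup.closure_induction with
  | mem e he =>
    intro ρ
    refine ⟨fun h => ?_, step_phi B Δ K ho he⟩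
    have := step_phi B Δ K ho he h
    rwa [refl_invol B Δ hdiag he] at this
  | one => intro v; rfl
  | mul x y _ _ hx hy =>
    intro v
    exact (hx (y v)).trans (hy v)
  | inv x _ hx =>
    intro v
    have h2 : x (x⁻¹ v) = v := x.apply_symm_apply v
    rw [← hx, h2]

theorem cox_mono (B : LinearMap.BilinForm ℝ V) (Δ : Module.Basis ι ℝ V) (K : Set ι) :
    coxOn B Δ K ≤ coxOn B Δ Set.univ :=
  Subgroup.closure_mono fun _ ⟨i, _, h⟩ => ⟨i, trivial, h⟩

theorem pos_mono (B : LinearMap.BilinForm ℝ V) (Δ : Module.Basis ι ℝ V) (K : Set ι) :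
    posPhiOn B Δ K ⊆ posPhiOn B Δ Set.univ := by
  rintro ρ ⟨⟨w, hw, i, _, h⟩, hp, _⟩
  exact ⟨⟨w, cox_mono B Δ K hw, i, trivial, h⟩, hp, fun i hi => absurd trivial hi⟩

theorem self_mem_phi (B : LinearMap.BilinForm ℝ V) (Δ : Module.Basis ι ℝ V) (K : Set ι)
    (i : ι) (hi : i ∈ K) : Δ i ∈ PhiOn B Δ K := ⟨1, Subgroup.one_mem _, i, hi, rfl⟩

theorem npos_union (B : LinearMap.BilinForm ℝ V) (Δ : Module.Basis ι ℝ V)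
    (hsymm : ∀ u v : V, B u v = B v u)
    (hdiag : ∀ i : ι, B (Δ i) (Δ i) = 1) (I : Set ι)
    (horth : ∀ i ∈ I, ∀ j ∈ Iᶜ, B (Δ i) (Δ j) = 0) :
    posPhiOn B Δ Set.univ = posPhiOn B Δ I ∪ posPhiOn B Δ Iᶜ := by
  apply Set.Subset.antisymm
  · rintro ρ ⟨⟨w, hw, i, _, rfl⟩, hp, _⟩
    by_cases hi : i ∈ I
    · have h := (cox_phi B Δ hdiag I (fun a ha b hb => by rw [hsymm]; exact horth b hb a ha)
        w hw (Δ i)).2 (self_mem_phi B Δ I i hi)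
      exact Or.inl ⟨h, hp, repr_zero Δ I (phi_mem_span B Δ I h)⟩
    · have h := (cox_phi B Δ hdiag Iᶜ (fun a ha b hb => horth a (by simpa using ha) b hb)
        w hw (Δ i)).2 (self_mem_phi B Δ Iᶜ i hi)
      exact Or.inr ⟨h, hp, repr_zero Δ Iᶜ (phi_mem_span B Δ Iᶜ h)⟩
  · exact Set.union_subset (pos_mono B Δ I) (pos_mono B Δ Iᶜ)

theorem eset_sub (B : LinearMap.BilinForm ℝ V) (Δ : Module.Basis ι ℝ V) (K : Set ι) {x : V}
    (hx : x ∈ EsetOn B Δ K) : l1 Δ x = 1 ∧ ∀ i ∉ K, Δ.repr x i = 0 := by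
  have : FiniteDimensional ℝ V := Module.Finite.of_basis Δ
  have hc : ∀ i, Continuous fun v => Δ.repr v i := fun i =>
    (Δ.coord i).continuous_of_finiteDimensional
  have hcl : IsClosed {x : V | l1 Δ x = 1 ∧ ∀ i ∉ K, Δ.repr x i = 0} := by
    refine IsClosed.inter (isClosed_eq (continuous_finsetSum _ fun i _ => hc i)
      continuous_const) ?_
    show IsClosed {x : V | ∀ i ∉ K, Δ.repr x i = 0}
    simp only [Set.setOf_forall]
    exact isClosed_iInter fun i => isClosed_iInter fun _ => isClosed_eq (hc i) continuous_const
  have hsub : nPhiOn B Δ K ⊆ {x : V | l1 Δ x = 1 ∧ ∀ i ∉ K, Δ.repr x i = 0} := by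
    rintro _ ⟨ρ, ⟨⟨w, _, i, _, hw⟩, hp, hz⟩, rfl⟩
    refine ⟨?_, fun i hi => by simp [nrm, hz i hi]⟩
    have hne : l1 Δ ρ ≠ 0 := by
      intro h0
      have h1 := (Finset.sum_eq_zero_iff_of_nonneg fun i _ => hp i).1 h0
      have h2 : ρ = 0 := by
        apply Δ.ext_elem
        intro j
        simpa using h1 j (Finset.mem_univ j)
      rw [h2] at hw
      exact Δ.ne_zero i (by simpa using hw)
    have : l1 Δ (nrm Δ ρ) = (l1 Δ ρ)⁻¹ * l1 Δ ρ := by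
      simp [l1, nrm, Finset.mul_sum]
    rw [this, inv_mul_cancel₀ hne]
  have hx' : AccPt x (𝓟 (nPhiOn B Δ K)) := hx
  exact (closure_minimal hsub hcl) hx'.clusterPt.mem_closure

/-- If `Δ = Δ_I ⊔ Δ_J` is a partition into two nonempty proper mutually `B`-orthogonal
parts (here `J = Iᶜ`), then `E(Φ)` is the disjoint union of `E(Φ_I)` and `E(Φ_J)`. -/
theorem statement7 (B : LinearMap.BilinForm ℝ V) (Δ : Module.Basis ι ℝ V)
    (hsymm : ∀ u v : V, B u v = B v u)
    (hdiag : ∀ i : ι, B (Δ i) (Δ i) = 1)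
    (hoff : ∀ i j : ι, i ≠ j → B (Δ i) (Δ j) ≤ -1 ∨
      ∃ k : ℕ, 2 ≤ k ∧ B (Δ i) (Δ j) = -Real.cos (Real.pi / (k : ℝ)))
    (I : Set ι) (hI : I.Nonempty) (hIc : Iᶜ.Nonempty)
    (horth : ∀ i ∈ I, ∀ j ∈ Iᶜ, B (Δ i) (Δ j) = 0) :
    EsetOn B Δ Set.univ = EsetOn B Δ I ∪ EsetOn B Δ Iᶜ ∧
    Disjoint (EsetOn B Δ I) (EsetOn B Δ Iᶜ) := by
  constructor
  · have hn : nPhiOn B Δ Set.univ = nPhiOn B Δ I ∪ nPhiOn B Δ Iᶜ := by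
      unfold nPhiOn
      rw [npos_union B Δ hsymm hdiag I horth, Set.image_union]
    ext x
    simp only [EsetOn, Set.mem_setOf_eq, Set.mem_union]
    rw [hn, ← Filter.sup_principal, accPt_sup]
  · rw [Set.disjoint_left]
    intro x h1 h2
    obtain ⟨ha, hb⟩ := eset_sub B Δ I h1
    obtain ⟨_, hd⟩ := eset_sub B Δ Iᶜ h2
    have : l1 Δ x = 0 := Finset.sum_eq_zero fun i _ => by
      by_cases hi : i ∈ I
      · exact hd i (by simpa using hi)
      · exact hb i hi
    rw [this] at ha
    exact zero_ne_one ha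
end
end

section
/- (i) For every w ∈ W and every x ∈ Φ̂ ∪ E(Φ), one has |w(x)|₁ ≠ 0, so that w·x = (w(x))^ is defined. (ii) The sets Φ̂ and E(Φ) are each stable under this action: if x ∈ Φ̂ then w·x ∈ Φ̂, and if x ∈ E(Φ) then w·x ∈ E(Φ); moreover Φ̂ = {w·α : w∈W, α∈Δ}. (iii) Consequently the set Φ̂ ∪ E(Φ), which is the topological closure of Φ̂, is stable under the action. -/
open Filter Topology

noncomputable section

variable {ι V : Type*} [Fintype ι] [NormedAddCommGroup V] [NormedSpace ℝ V]

set_option linter.unusedSectionVars false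

/-! ### Chebyshev-type sequence -/

def aSeq (c : ℝ) : ℕ → ℝ
  | 0 => 0
  | 1 => 1
  | (n + 2) => 2 * c * aSeq c (n + 1) - aSeq c n

theorem aSeq_nonneg_of_one_le {c : ℝ} (hc : 1 ≤ c) (n : ℕ) :
    0 ≤ aSeq c n ∧ aSeq c n ≤ aSeq c (n + 1) := by
  induction n with
  | zero => simp [aSeq]
  | succ n ih =>
    obtain ⟨h0, h1⟩ := ih
    refine ⟨h0.trans h1, ?_⟩
    show _ ≤ 2 * c * aSeq c (n + 1) - aSeq c n
    nlinarith

theorem aSeq_mul_sin (θ : ℝ) (n : ℕ) :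
    aSeq (Real.cos θ) n * Real.sin θ = Real.sin (n * θ) ∧
    aSeq (Real.cos θ) (n + 1) * Real.sin θ = Real.sin ((n + 1) * θ) := by
  induction n with
  | zero => simp [aSeq]
  | succ n ih =>
    obtain ⟨h0, h1⟩ := ih
    refine ⟨by push_cast; exact h1, ?_⟩
    show (2 * Real.cos θ * aSeq (Real.cos θ) (n + 1) - aSeq (Real.cos θ) n) * Real.sin θ = _
    rw [sub_mul, mul_assoc, h1, h0]
    push_cast
    rw [show ((n : ℝ) + 1 + 1) * θ = (n + 1) * θ + θ by ring,
      show (n : ℝ) * θ = (n + 1) * θ - θ by ring, Real.sin_add, Real.sin_sub]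
    ring

theorem sin_pi_div_pos {k : ℕ} (hk : 2 ≤ k) : 0 < Real.sin (Real.pi / k) := by
  have hk' : (2 : ℝ) ≤ k := by exact_mod_cast hk
  apply Real.sin_pos_of_pos_of_lt_pi
  · have := Real.pi_pos
    positivity
  · rw [div_lt_iff₀ (by linarith)]
    nlinarith [Real.pi_pos]

theorem aSeq_nonneg_of_cos {k : ℕ} (hk : 2 ≤ k) {n : ℕ} (hn : n ≤ k) :
    0 ≤ aSeq (Real.cos (Real.pi / k)) n := by
  have h := sin_pi_div_pos hk
  have h1 := (aSeq_mul_sin (Real.pi / k) n).1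
  have hk' : (2 : ℝ) ≤ k := by exact_mod_cast hk
  have hn' : (n : ℝ) ≤ k := by exact_mod_cast hn
  have h2 : 0 ≤ Real.sin (n * (Real.pi / k)) := by
    apply Real.sin_nonneg_of_nonneg_of_le_pi
    · have := Real.pi_pos
      positivity
    · rw [← mul_div_assoc, div_le_iff₀ (by linarith)]
      nlinarith [Real.pi_pos]
  rw [← h1] at h2
  exact nonneg_of_mul_nonneg_left h2 h

/-! ### Simple reflections -/

def SimpRefl (B : LinearMap.BilinForm ℝ V) (Δ : Module.Basis ι ℝ V) (r : ι → V ≃ₗ[ℝ] V) : Prop :=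
  ∀ i u, r i u = u - (2 * B (Δ i) u) • Δ i

theorem exists_simpRefl (B : LinearMap.BilinForm ℝ V) (Δ : Module.Basis ι ℝ V)
    (hdiag : ∀ i : ι, B (Δ i) (Δ i) = 1) : ∃ r, SimpRefl B Δ r := by
  refine ⟨fun i => Module.reflection (x := Δ i) (f := (2 : ℝ) • B (Δ i)) (by simp [hdiag]), ?_⟩
  intro i u
  simp [Module.reflection_apply]

section
variable {B : LinearMap.BilinForm ℝ V} {Δ : Module.Basis ι ℝ V} {r : ι → V ≃ₗ[ℝ] V}

theorem refl_self (hr : SimpRefl B Δ r) (hdiag : ∀ i : ι, B (Δ i) (Δ i) = 1) (i : ι) :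
    r i (Δ i) = - Δ i := by
  rw [hr, hdiag]; module

theorem refl_mul_self (hr : SimpRefl B Δ r) (hdiag : ∀ i : ι, B (Δ i) (Δ i) = 1) (i : ι) :
    r i * r i = 1 := by
  ext u
  simp only [LinearEquiv.mul_apply, LinearEquiv.coe_one, id]
  rw [hr i u, map_sub, map_smul, refl_self hr hdiag, hr i u]
  module

theorem pow_apply_root (hr : SimpRefl B Δ r) (hsymm : ∀ u v : V, B u v = B v u)
    (hdiag : ∀ i : ι, B (Δ i) (Δ i) = 1) (i j : ι) (θ : ℝ)
    (hb : B (Δ i) (Δ j) = - Real.cos θ) (n : ℕ) :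
    Real.sin θ • ((r i * r j) ^ n) (Δ i) =
      Real.sin ((2 * n + 1) * θ) • Δ i + Real.sin (2 * n * θ) • Δ j := by
  have hb' : B (Δ j) (Δ i) = - Real.cos θ := by rw [hsymm, hb]
  induction n with
  | zero => simp
  | succ n ih =>
    rw [pow_succ', LinearEquiv.mul_apply, ← map_smul, ih]
    simp only [LinearEquiv.mul_apply, map_add, map_smul]
    rw [hr j (Δ i), refl_self hr hdiag j, hb', map_neg, map_sub, map_smul,
      refl_self hr hdiag i, hr i (Δ j), hb]
    have e1 : ∀ a : ℝ, Real.sin (a + θ) = 2 * Real.cos θ * Real.sin a - Real.sin (a - θ) := by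
      intro a
      rw [Real.sin_add, Real.sin_sub]; ring
    have e2 : Real.sin ((2 * ((n + 1 : ℕ) : ℝ)) * θ) =
        2 * Real.cos θ * Real.sin ((2 * n + 1) * θ) - Real.sin (2 * n * θ) := by
      have := e1 ((2 * n + 1) * θ)
      rw [show (2 * (n : ℝ) + 1) * θ - θ = 2 * n * θ by ring] at this
      rw [← this]; congr 1; push_cast; ring
    have e3 : Real.sin ((2 * ((n + 1 : ℕ) : ℝ) + 1) * θ) =
        2 * Real.cos θ * Real.sin ((2 * ((n + 1 : ℕ) : ℝ)) * θ) - Real.sin ((2 * n + 1) * θ) := by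
      have := e1 ((2 * ((n + 1 : ℕ) : ℝ)) * θ)
      rw [show (2 * ((n + 1 : ℕ) : ℝ)) * θ - θ = (2 * n + 1) * θ by push_cast; ring] at this
      rw [← this]; congr 1; push_cast; ring
    rw [e3, e2]
    module

theorem pow_root_eq (hr : SimpRefl B Δ r) (hsymm : ∀ u v : V, B u v = B v u)
    (hdiag : ∀ i : ι, B (Δ i) (Δ i) = 1) (i j : ι) {k : ℕ} (hk : 2 ≤ k)
    (hb : B (Δ i) (Δ j) = - Real.cos (Real.pi / k)) :
    ((r i * r j) ^ k) (Δ i) = Δ i := by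
  have h := pow_apply_root hr hsymm hdiag i j _ hb k
  have hk0 : (k : ℝ) ≠ 0 := by positivity
  rw [show (2 * (k : ℝ) + 1) * (Real.pi / k) = Real.pi / k + 2 * Real.pi by field_simp; ring,
    show 2 * (k : ℝ) * (Real.pi / k) = 2 * Real.pi by field_simp, Real.sin_add_two_pi,
    Real.sin_two_pi, zero_smul, add_zero] at h
  exact smul_right_injective V (sin_pi_div_pos hk).ne' h

theorem pow_eq_one (hr : SimpRefl B Δ r) (hsymm : ∀ u v : V, B u v = B v u)
    (hdiag : ∀ i : ι, B (Δ i) (Δ i) = 1) (i j : ι) {k : ℕ} (hk : 2 ≤ k)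
    (hb : B (Δ i) (Δ j) = - Real.cos (Real.pi / k)) :
    (r i * r j) ^ k = 1 := by
  have hi := pow_root_eq hr hsymm hdiag i j hk hb
  have hj := pow_root_eq hr hsymm hdiag j i hk (by rw [hsymm, hb])
  have hinv : ∀ i, (r i)⁻¹ = r i := fun i => inv_eq_of_mul_eq_one_left (refl_mul_self hr hdiag i)
  have hj' : ((r i * r j) ^ k) (Δ j) = Δ j := by
    have e : (r j * r i) ^ k = ((r i * r j) ^ k)⁻¹ := by
      rw [← inv_pow, mul_inv_rev, hinv, hinv]
    rw [e] at hj
    conv_lhs => rw [← hj]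
    rw [← LinearEquiv.mul_apply, mul_inv_cancel, LinearEquiv.coe_one, id]
  have hfix : ∀ q, B (Δ i) q = 0 → B (Δ j) q = 0 → ∀ n : ℕ, ((r i * r j) ^ n) q = q := by
    intro q h1 h2 n
    induction n with
    | zero => simp
    | succ n ih =>
      rw [pow_succ', LinearEquiv.mul_apply, ih, LinearEquiv.mul_apply, hr j, h2]
      simp [hr i, h1]
  set c := Real.cos (Real.pi / k) with hc
  have hcc : 1 - c ^ 2 ≠ 0 := by
    have h1 := sin_pi_div_pos hk
    have h2 := Real.sin_sq_add_cos_sq (Real.pi / k)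
    rw [← hc] at h2
    have : 0 < Real.sin (Real.pi / k) ^ 2 := by positivity
    intro h; linarith
  have hb' : B (Δ j) (Δ i) = - c := by rw [hsymm, hb]
  ext u
  obtain ⟨a, ha⟩ : ∃ a, a = (B (Δ i) u + c * B (Δ j) u) / (1 - c ^ 2) := ⟨_, rfl⟩
  obtain ⟨b, hbb⟩ : ∃ b, b = (B (Δ j) u + c * B (Δ i) u) / (1 - c ^ 2) := ⟨_, rfl⟩
  have hq := hfix (u - a • Δ i - b • Δ j)
    (by simp only [map_sub, map_smul, smul_eq_mul, hdiag, hb, ha, hbb]; field_simp; ring)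
    (by simp only [map_sub, map_smul, smul_eq_mul, hdiag, hb', ha, hbb]; field_simp; ring) k
  rw [map_sub, map_sub, map_smul, map_smul, hi, hj'] at hq
  simpa using hq

/-! ### Roots are positive or negative -/

def IsPos (Δ : Module.Basis ι ℝ V) (v : V) : Prop := ∀ i, 0 ≤ Δ.repr v i

theorem IsPos.comb {x y : V} (hx : IsPos Δ x) (hy : IsPos Δ y) {a b : ℝ} (ha : 0 ≤ a)
    (hb : 0 ≤ b) : IsPos Δ (a • x + b • y) := by
  intro i
  have := hx i
  have := hy i
  simp only [map_add, map_smul, Finsupp.add_apply, Finsupp.smul_apply, smul_eq_mul]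
  positivity

theorem isPos_simple (i : ι) : IsPos Δ (Δ i) := by
  classical
  intro j
  rw [Module.Basis.repr_self, Finsupp.single_apply]
  split_ifs <;> norm_num

open CoxeterSystem

variable {M : CoxeterMatrix ι} {W : Type*} [Group W] (cs : CoxeterSystem M W)
  {φ : W →* (V ≃ₗ[ℝ] V)}

theorem alt_apply_s9 (hr : SimpRefl B Δ r) (hsymm : ∀ u v : V, B u v = B v u)
    (hdiag : ∀ i : ι, B (Δ i) (Δ i) = 1) (hφ : ∀ i, φ (cs.simple i) = r i) (s t : ι)
    (n : ℕ) :
    φ (cs.wordProd (alternatingWord s t n)) (Δ s) =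
      aSeq (- B (Δ s) (Δ t)) (n + 1) • Δ (if Even n then s else t)
      + aSeq (- B (Δ s) (Δ t)) n • Δ (if Even n then t else s) := by
  induction n with
  | zero => simp [aSeq, alternatingWord]
  | succ n ih =>
    rw [alternatingWord_succ', wordProd_cons, map_mul, hφ, LinearEquiv.mul_apply, ih]
    rw [show aSeq (- B (Δ s) (Δ t)) (n + 1 + 1) = 2 * (- B (Δ s) (Δ t)) *
      aSeq (- B (Δ s) (Δ t)) (n + 1) - aSeq (- B (Δ s) (Δ t)) n from rfl]
    by_cases h : Even n
    · have h' : ¬ Even (n + 1) := by simpa [Nat.even_add_one] using h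
      simp only [h, h', if_true, if_false, map_add, map_smul, refl_self hr hdiag]
      rw [hr t (Δ s), hsymm (Δ t) (Δ s)]
      module
    · have h' : Even (n + 1) := by simpa [Nat.even_add_one] using h
      simp only [h, h', if_true, if_false, map_add, map_smul, refl_self hr hdiag]
      rw [hr s (Δ t)]
      module

theorem strip (w : W) (s t : ι) : ∀ (n : ℕ) (v : W) (j : ℕ), cs.length v = n →
    w = v * cs.wordProd (alternatingWord s t j) → cs.length w = cs.length v + j → 1 ≤ j →
    ∃ v' j', w = v' * cs.wordProd (alternatingWord s t j') ∧ cs.length w = cs.length v' + j' ∧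
      1 ≤ j' ∧ ¬ cs.IsRightDescent v' s ∧ ¬ cs.IsRightDescent v' t := by
  intro n
  induction n with
  | zero =>
    intro v j hv hw hl hj
    refine ⟨v, j, hw, hl, hj, ?_, ?_⟩ <;>
    · rw [CoxeterSystem.IsRightDescent]; omega
  | succ n ih =>
    intro v j hv hw hl hj
    by_cases hd : cs.IsRightDescent v (if Even j then t else s)
    · rw [cs.isRightDescent_iff] at hd
      refine ih (v * cs.simple (if Even j then t else s)) (j + 1) (by omega) ?_ (by omega)
        (by omega)
      rw [alternatingWord_succ', wordProd_cons, mul_assoc, cs.simple_mul_simple_cancel_left]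
      exact hw
    · have hd' : ¬ cs.IsRightDescent v (if Even j then s else t) := by
        intro hd'
        rw [cs.isRightDescent_iff] at hd'
        obtain ⟨j, rfl⟩ : ∃ k, j = k + 1 := ⟨j - 1, by omega⟩
        have e : (if Even (j + 1) then s else t) = if Even j then t else s := by
          by_cases h : Even j <;> simp [h, Nat.even_add_one]
        rw [alternatingWord_succ', wordProd_cons, ← mul_assoc, ← e] at hw
        have h1 := cs.length_mul_le (v * cs.simple (if Even (j + 1) then s else t))
          (cs.wordProd (alternatingWord s t j))
        rw [← hw] at h1
        have h2 := cs.length_wordProd_le (alternatingWord s t j)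
        rw [length_alternatingWord] at h2
        omega
      refine ⟨v, j, hw, hl, hj, ?_, ?_⟩
      · by_cases h : Even j
        · simpa [h] using hd'
        · simpa [h] using hd
      · by_cases h : Even j
        · simpa [h] using hd
        · simpa [h] using hd'

theorem alt_split (s t : ι) (m d : ℕ) : ∃ x : List ι, x.length = d ∧
    alternatingWord s t (m + d) = x ++ alternatingWord s t m := by
  induction d with
  | zero => exact ⟨[], by simp⟩
  | succ d ih =>
    obtain ⟨x, hx, h⟩ := ih
    refine ⟨(if Even (m + d) then t else s) :: x, by simp [hx], ?_⟩
    rw [← add_assoc, alternatingWord_succ', h]; rfl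

theorem alt_lt (w v : W) (s t : ι) (j : ℕ)
    (hw : w = v * cs.wordProd (alternatingWord s t j)) (hl : cs.length w = cs.length v + j)
    (hs : ¬ cs.IsRightDescent w s) (hM : 2 ≤ M s t) : j < M s t := by
  by_contra hlt
  obtain ⟨d, rfl⟩ : ∃ d, j = M s t + d := ⟨j - M s t, by omega⟩
  obtain ⟨x, hx, h⟩ := alt_split s t (M s t) d
  rw [cs.not_isRightDescent_iff] at hs
  obtain ⟨m, hm⟩ : ∃ m, M s t = m + 1 := ⟨M s t - 1, by omega⟩
  have hb := cs.wordProd_braidWord_eq s t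
  rw [braidWord, braidWord, M.symmetric t s, hm, alternatingWord_succ t s, wordProd_concat] at hb
  rw [h, wordProd_append, hm, hb] at hw
  have e : w * cs.simple s = v * cs.wordProd (x ++ alternatingWord s t m) := by
    rw [hw, wordProd_append]
    simp [mul_assoc]
  have h1 := cs.length_mul_le v (cs.wordProd (x ++ alternatingWord s t m))
  have h2 := cs.length_wordProd_le (x ++ alternatingWord s t m)
  rw [← e] at h1
  rw [List.length_append, length_alternatingWord, hx] at h2
  omega

theorem root_pos (hr : SimpRefl B Δ r) (hsymm : ∀ u v : V, B u v = B v u)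
    (hdiag : ∀ i : ι, B (Δ i) (Δ i) = 1) (hφ : ∀ i, φ (cs.simple i) = r i)
    (hM : ∀ i j, i ≠ j → B (Δ i) (Δ j) ≤ -1 ∨
      (2 ≤ M i j ∧ B (Δ i) (Δ j) = - Real.cos (Real.pi / (M i j : ℝ)))) :
    ∀ (n : ℕ) (w : W), cs.length w = n → ∀ s, ¬ cs.IsRightDescent w s →
      IsPos Δ (φ w (Δ s)) := by
  intro n
  induction n using Nat.strong_induction_on with
  | _ n ih =>
  intro w hwn s hs
  by_cases hw1 : w = 1
  · subst hw1
    simpa using isPos_simple s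
  obtain ⟨t, ht⟩ := cs.exists_rightDescent_of_ne_one hw1
  have hst : s ≠ t := by rintro rfl; exact hs ht
  rw [cs.isRightDescent_iff] at ht
  obtain ⟨v, j, hw, hl, hj, hvs, hvt⟩ := strip cs w s t _ (w * cs.simple t) 1 rfl
    (by simp [alternatingWord]) (by omega) le_rfl
  have hps := ih _ (by omega) v rfl s hvs
  have hpt := ih _ (by omega) v rfl t hvt
  have ha : 0 ≤ aSeq (- B (Δ s) (Δ t)) (j + 1) ∧ 0 ≤ aSeq (- B (Δ s) (Δ t)) j := by
    rcases hM s t hst with h | ⟨h2, h⟩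
    · exact ⟨(aSeq_nonneg_of_one_le (by linarith) _).1, (aSeq_nonneg_of_one_le (by linarith) _).1⟩
    · have := alt_lt cs w v s t j hw hl hs h2
      rw [h, neg_neg]
      exact ⟨aSeq_nonneg_of_cos h2 (by omega), aSeq_nonneg_of_cos h2 (by omega)⟩
  rw [hw, map_mul, LinearEquiv.mul_apply, alt_apply_s9 cs hr hsymm hdiag hφ, map_add, map_smul,
    map_smul]
  refine IsPos.comb ?_ ?_ ha.1 ha.2 <;> split_ifs <;> assumption

end

theorem simple_mem_iff (B : LinearMap.BilinForm ℝ V) (Δ : Module.Basis ι ℝ V)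
    (hdiag : ∀ i : ι, B (Δ i) (Δ i) = 1) {r : ι → V ≃ₗ[ℝ] V} (hr : SimpRefl B Δ r)
    (e : V ≃ₗ[ℝ] V) : e ∈ simpleReflections B Δ ↔ ∃ i, e = r i := by
  unfold simpleReflections
  simp only [Set.mem_setOf_eq]
  refine exists_congr fun i => ?_
  constructor
  · intro h
    ext u
    rw [h, hr, hdiag, div_one]
  · rintro rfl u
    rw [hr, hdiag, div_one]

theorem pos_or_neg (B : LinearMap.BilinForm ℝ V) (Δ : Module.Basis ι ℝ V)
    (hsymm : ∀ u v : V, B u v = B v u)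
    (hdiag : ∀ i : ι, B (Δ i) (Δ i) = 1)
    (hoff : ∀ i j : ι, i ≠ j → B (Δ i) (Δ j) ≤ -1 ∨
      ∃ k : ℕ, 2 ≤ k ∧ B (Δ i) (Δ j) = -Real.cos (Real.pi / (k : ℝ)))
    (w : V ≃ₗ[ℝ] V) (hw : w ∈ cox B Δ) (i : ι) :
    IsPos Δ (w (Δ i)) ∨ IsPos Δ (-(w (Δ i))) := by
  classical
  obtain ⟨r, hr⟩ := exists_simpRefl B Δ hdiag
  let f : ℝ → ℕ := fun b => if h : ∃ k : ℕ, 2 ≤ k ∧ b = -Real.cos (Real.pi / (k : ℝ))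
    then h.choose else 0
  have hf : ∀ b, f b = 0 ∨ (2 ≤ f b ∧ b = -Real.cos (Real.pi / (f b : ℝ))) := by
    intro b
    by_cases h : ∃ k : ℕ, 2 ≤ k ∧ b = -Real.cos (Real.pi / (k : ℝ))
    · right
      have e : f b = h.choose := by simp only [f]; rw [dif_pos h]
      rw [e]
      exact h.choose_spec
    · left
      simp only [f]; rw [dif_neg h]
  have hf' : ∀ b, (∃ k : ℕ, 2 ≤ k ∧ b = -Real.cos (Real.pi / (k : ℝ))) →
      (2 ≤ f b ∧ b = -Real.cos (Real.pi / (f b : ℝ))) := by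
    intro b h
    have e : f b = h.choose := by simp only [f]; rw [dif_pos h]
    rw [e]
    exact h.choose_spec
  let M : CoxeterMatrix ι :=
    { M := fun i j => if i = j then 1 else f (B (Δ i) (Δ j))
      isSymm := by
        ext i j
        show (if j = i then 1 else f (B (Δ j) (Δ i))) = (if i = j then 1 else f (B (Δ i) (Δ j)))
        rw [hsymm (Δ j) (Δ i)]
        by_cases h : i = j
        · rw [if_pos h, if_pos h.symm]
        · rw [if_neg h, if_neg (Ne.symm h)]
      diagonal := by intro i; simp
      off_diagonal := by
        intro i j hij
        simp only [hij, if_false]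
        rcases hf (B (Δ i) (Δ j)) with h | h
        · rw [h]; norm_num
        · omega }
  have hMd : ∀ i j, i ≠ j → M i j = f (B (Δ i) (Δ j)) := by
    intro i j hij
    show (if i = j then 1 else f (B (Δ i) (Δ j))) = _
    simp [hij]
  have hlift : M.IsLiftable r := by
    intro i j
    by_cases hij : i = j
    · subst hij
      rw [refl_mul_self hr hdiag, one_pow]
    · rw [hMd i j hij]
      rcases hf (B (Δ i) (Δ j)) with h | ⟨h, h'⟩
      · rw [h, pow_zero]
      · exact pow_eq_one hr hsymm hdiag i j h h'
  let cs := M.toCoxeterSystem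
  let φ : M.Group →* (V ≃ₗ[ℝ] V) := cs.lift ⟨r, hlift⟩
  have hφ : ∀ i, φ (cs.simple i) = r i := fun i => cs.lift_apply_simple hlift i
  have key := root_pos cs hr hsymm hdiag hφ (by
    intro i j hij
    rcases hoff i j hij with h | h
    · exact Or.inl h
    · right
      rw [hMd i j hij]
      exact hf' _ h)
  have hle : cox B Δ ≤ φ.range := by
    unfold cox
    rw [Subgroup.closure_le]
    intro e he
    obtain ⟨i, rfl⟩ := (simple_mem_iff B Δ hdiag hr e).1 he
    exact ⟨cs.simple i, hφ i⟩
  obtain ⟨g, rfl⟩ := hle hw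
  by_cases hd : cs.IsRightDescent g i
  · right
    rw [cs.isRightDescent_iff_not_isRightDescent_mul] at hd
    have := key _ _ rfl i hd
    rwa [map_mul, hφ, LinearEquiv.mul_apply, refl_self hr hdiag, map_neg] at this
  · left
    exact key _ _ rfl i hd

/-! ### Normalization -/

section
variable {B : LinearMap.BilinForm ℝ V} {Δ : Module.Basis ι ℝ V} {r : ι → V ≃ₗ[ℝ] V}

theorem l1_smul (c : ℝ) (v : V) : l1 Δ (c • v) = c * l1 Δ v := by
  simp [l1, Finset.mul_sum]

theorem l1_neg (v : V) : l1 Δ (-v) = - l1 Δ v := by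
  simp [l1]

theorem l1_pos {v : V} (hv : IsPos Δ v) (h0 : v ≠ 0) : 0 < l1 Δ v := by
  unfold l1
  apply lt_of_le_of_ne (Finset.sum_nonneg fun i _ => hv i)
  intro h
  apply h0
  have := (Finset.sum_eq_zero_iff_of_nonneg (fun i _ => hv i)).1 h.symm
  apply Δ.repr.injective
  ext i
  simpa using this i (Finset.mem_univ i)

theorem nrm_smul {c : ℝ} (hc : c ≠ 0) (v : V) : nrm Δ (c • v) = nrm Δ v := by
  unfold nrm
  rw [l1_smul, smul_smul]
  congr 1
  field_simp

theorem nrm_neg (v : V) : nrm Δ (-v) = nrm Δ v := by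
  have := nrm_smul (Δ := Δ) (c := -1) (by norm_num) v
  simpa using this

theorem l1_nrm {v : V} (h : l1 Δ v ≠ 0) : l1 Δ (nrm Δ v) = 1 := by
  unfold nrm
  rw [l1_smul, inv_mul_cancel₀ h]

theorem nrm_of_l1 {v : V} (h : l1 Δ v = 1) : nrm Δ v = v := by
  unfold nrm
  rw [h]; simp

theorem isPos_nrm {v : V} (hv : IsPos Δ v) : IsPos Δ (nrm Δ v) := by
  intro i
  unfold nrm
  have h1 : 0 ≤ l1 Δ v := Finset.sum_nonneg fun i _ => hv i
  have := hv i
  simp only [map_smul, Finsupp.smul_apply, smul_eq_mul]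
  positivity

theorem refl_mem (hr : SimpRefl B Δ r) (hdiag : ∀ i : ι, B (Δ i) (Δ i) = 1) (i : ι) :
    r i ∈ cox B Δ :=
  Subgroup.subset_closure ((simple_mem_iff B Δ hdiag hr _).2 ⟨i, rfl⟩)

theorem isometry (hr : SimpRefl B Δ r) (hsymm : ∀ u v : V, B u v = B v u)
    (hdiag : ∀ i : ι, B (Δ i) (Δ i) = 1)
    (w : V ≃ₗ[ℝ] V) (hw : w ∈ cox B Δ) : ∀ u, B (w u) (w u) = B u u := by
  unfold cox at hw
  induction hw using Subgroup.closure_induction with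
  | mem e he =>
    obtain ⟨i, rfl⟩ := (simple_mem_iff B Δ hdiag hr e).1 he
    intro u
    rw [hr]
    simp only [map_sub, map_smul, LinearMap.sub_apply, LinearMap.smul_apply, smul_eq_mul, hdiag]
    rw [hsymm u (Δ i)]
    ring
  | one => intro u; simp
  | mul a b _ _ ha hb => intro u; rw [LinearEquiv.mul_apply, ha, hb]
  | inv a _ ha =>
    intro u
    rw [← ha, ← LinearEquiv.mul_apply, mul_inv_cancel]; simp

theorem nPhi_eq (hr : SimpRefl B Δ r) (hdiag : ∀ i : ι, B (Δ i) (Δ i) = 1)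
    (hpn : ∀ w ∈ cox B Δ, ∀ i, IsPos Δ (w (Δ i)) ∨ IsPos Δ (-(w (Δ i)))) :
    nPhi B Δ = { y : V | ∃ w ∈ cox B Δ, ∃ i : ι, y = nrm Δ (w (Δ i)) } := by
  ext y
  constructor
  · rintro ⟨ρ, ⟨⟨w, hw, i, rfl⟩, -⟩, rfl⟩
    exact ⟨w, hw, i, rfl⟩
  · rintro ⟨w, hw, i, rfl⟩
    rcases hpn w hw i with h | h
    · exact ⟨_, ⟨⟨w, hw, i, rfl⟩, h⟩, rfl⟩
    · refine ⟨_, ⟨⟨w * r i, mul_mem hw (refl_mem hr hdiag i), i, rfl⟩, ?_⟩, ?_⟩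
      · rw [LinearEquiv.mul_apply, refl_self hr hdiag, map_neg]; exact h
      · rw [LinearEquiv.mul_apply, refl_self hr hdiag, map_neg, nrm_neg]

theorem root_ne_zero (w : V ≃ₗ[ℝ] V) (i : ι) : w (Δ i) ≠ 0 := by
  rw [Ne, LinearEquiv.map_eq_zero_iff]
  exact Δ.ne_zero i

theorem root_l1_ne
    (hpn : ∀ w ∈ cox B Δ, ∀ i, IsPos Δ (w (Δ i)) ∨ IsPos Δ (-(w (Δ i))))
    (w : V ≃ₗ[ℝ] V) (hw : w ∈ cox B Δ) (i : ι) : l1 Δ (w (Δ i)) ≠ 0 := by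
  rcases hpn w hw i with h | h
  · exact (l1_pos h (root_ne_zero w i)).ne'
  · have := l1_pos h (neg_ne_zero.2 (root_ne_zero w i))
    rw [l1_neg] at this
    linarith

theorem refl_nPhi (hr : SimpRefl B Δ r) (hsymm : ∀ u v : V, B u v = B v u)
    (hdiag : ∀ i : ι, B (Δ i) (Δ i) = 1)
    (hpn : ∀ w ∈ cox B Δ, ∀ i, IsPos Δ (w (Δ i)) ∨ IsPos Δ (-(w (Δ i))))
    (i : ι) (x : V) (hx : x ∈ nPhi B Δ) (hne : x ≠ Δ i) : IsPos Δ (r i x) := by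
  classical
  obtain ⟨ρ, ⟨⟨w, hw, j, rfl⟩, hp⟩, rfl⟩ := hx
  have hl := l1_pos hp (root_ne_zero w j)
  have hcase := hpn (r i * w) (mul_mem (refl_mem hr hdiag i) hw) j
  rw [LinearEquiv.mul_apply] at hcase
  rcases hcase with h | h
  · unfold nrm
    rw [map_smul]
    intro k
    have := h k
    simp only [map_smul, Finsupp.smul_apply, smul_eq_mul]
    positivity
  · exfalso
    apply hne
    have hz : ∀ k, k ≠ i → Δ.repr (w (Δ j)) k = 0 := by
      intro k hk
      apply le_antisymm _ (hp k)
      have := h k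
      rw [hr] at this
      simpa [Finsupp.single_apply, hk.symm] using this
    have hsm : w (Δ j) = (Δ.repr (w (Δ j)) i) • Δ i := by
      conv_lhs => rw [← Δ.sum_repr (w (Δ j))]
      apply Finset.sum_eq_single i
      · intro k _ hk
        rw [hz k hk, zero_smul]
      · simp
    have hc : Δ.repr (w (Δ j)) i ≠ 0 := by
      intro h0
      rw [h0, zero_smul] at hsm
      exact root_ne_zero w j hsm
    rw [hsm, nrm_smul hc]
    apply nrm_of_l1
    simp [l1]

theorem comp_step {x : V} {a b : V ≃ₗ[ℝ] V} (hb : l1 Δ (b x) ≠ 0) :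
    l1 Δ ((a * b) x) = l1 Δ (b x) * l1 Δ (a (nrm Δ (b x))) ∧
    nrm Δ ((a * b) x) = nrm Δ (a (nrm Δ (b x))) := by
  have e : (a * b) x = l1 Δ (b x) • a (nrm Δ (b x)) := by
    rw [nrm, map_smul, smul_smul, mul_inv_cancel₀ hb, one_smul]; rfl
  constructor
  · rw [e, l1_smul]
  · rw [e, nrm_smul hb]

theorem cont_lin (Δ : Module.Basis ι ℝ V) (w : V →ₗ[ℝ] V) : Continuous w := by
  haveI : FiniteDimensional ℝ V := Module.Basis.finiteDimensional_of_finite Δ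
  exact LinearMap.continuous_of_finiteDimensional w

theorem cont_coord (Δ : Module.Basis ι ℝ V) (i : ι) : Continuous fun v => Δ.repr v i := by
  haveI : FiniteDimensional ℝ V := Module.Basis.finiteDimensional_of_finite Δ
  exact LinearMap.continuous_of_finiteDimensional (Δ.coord i)

theorem cont_l1 (Δ : Module.Basis ι ℝ V) : Continuous (l1 Δ) :=
  continuous_finset_sum _ fun i _ => cont_coord Δ i

theorem isClosed_pos (Δ : Module.Basis ι ℝ V) : IsClosed {v | IsPos Δ v} := by
  simp only [IsPos, Set.setOf_forall]
  exact isClosed_iInter fun i => isClosed_le continuous_const (cont_coord Δ i)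

theorem nPhi_l1 {x : V} (hx : x ∈ nPhi B Δ) : l1 Δ x = 1 := by
  obtain ⟨ρ, ⟨⟨w, hw, j, rfl⟩, hp⟩, rfl⟩ := hx
  exact l1_nrm (l1_pos hp (root_ne_zero w j)).ne'

theorem Eset_l1 {x : V} (hx : x ∈ Eset B Δ) : l1 Δ x = 1 := by
  have hc : x ∈ closure (nPhi B Δ) := derivedSet_subset_closure _ hx
  exact closure_minimal (fun y hy => nPhi_l1 hy)
    (isClosed_eq (cont_l1 Δ) continuous_const) hc

theorem refl_E (hr : SimpRefl B Δ r) (hsymm : ∀ u v : V, B u v = B v u)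
    (hdiag : ∀ i : ι, B (Δ i) (Δ i) = 1)
    (hpn : ∀ w ∈ cox B Δ, ∀ i, IsPos Δ (w (Δ i)) ∨ IsPos Δ (-(w (Δ i))))
    (hst : ∀ w ∈ cox B Δ, ∀ x ∈ nPhi B Δ, l1 Δ (w x) ≠ 0 ∧ nrm Δ (w x) ∈ nPhi B Δ)
    (i : ι) (x : V) (hx : x ∈ Eset B Δ) :
    l1 Δ (r i x) ≠ 0 ∧ nrm Δ (r i x) ∈ Eset B Δ := by
  have hx1 := Eset_l1 hx
  have hfr : ∃ᶠ y in 𝓝 x, y ≠ x ∧ y ∈ nPhi B Δ := accPt_iff_frequently.1 hx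
  have hcont : Continuous (r i) := cont_lin Δ (r i).toLinearMap
  have hfr2 : ∃ᶠ y in 𝓝 x, IsPos Δ (r i y) := by
    have hE : AccPt x (𝓟 (nPhi B Δ)) := hx
    rw [accPt_iff_frequently] at hE
    by_cases hxi : x = Δ i
    · exact hE.mono fun y hy => refl_nPhi hr hsymm hdiag hpn i y hy.2 (hxi ▸ hy.1)
    · have hev : ∀ᶠ y in 𝓝 x, y ≠ Δ i := isOpen_ne.mem_nhds hxi
      exact (hE.and_eventually hev).mono fun y hy => refl_nPhi hr hsymm hdiag hpn i y hy.1.2 hy.2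
  have hpx : IsPos Δ (r i x) := by
    have hcl : IsClosed {y | IsPos Δ (r i y)} := (isClosed_pos Δ).preimage hcont
    have : x ∈ closure {y | IsPos Δ (r i y)} := mem_closure_iff_frequently.2 hfr2
    rwa [hcl.closure_eq] at this
  have hx0 : x ≠ 0 := by
    rintro rfl
    simp [l1] at hx1
  have hl : l1 Δ (r i x) ≠ 0 := (l1_pos hpx (by simpa using hx0)).ne'
  refine ⟨hl, ?_⟩
  have hct : ContinuousAt (fun y => nrm Δ (r i y)) x := by
    unfold nrm
    exact (((cont_l1 Δ).comp hcont).continuousAt.inv₀ hl).smul hcont.continuousAt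
  show AccPt _ _
  rw [accPt_iff_frequently]
  apply hct.frequently
  refine hfr.mono ?_
  rintro y ⟨hyx, hy⟩
  obtain ⟨h1, h2⟩ := hst _ (refl_mem hr hdiag i) y hy
  refine ⟨fun heq => hyx ?_, h2⟩
  have hinv : ∀ z, l1 Δ z = 1 → l1 Δ (r i z) ≠ 0 → nrm Δ (r i (nrm Δ (r i z))) = z := by
    intro z hz hz'
    rw [← (comp_step (a := r i) (b := r i) hz').2, refl_mul_self hr hdiag]
    exact nrm_of_l1 hz
  rw [← hinv y (nPhi_l1 hy) h1, ← hinv x hx1 hl]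
  simp only [heq]

end

/-- The normalized action of `W` on `Φ̂ ∪ E(Φ)`:
(i) for `w ∈ W` and `x ∈ Φ̂ ∪ E(Φ)`, `|w(x)|₁ ≠ 0`, so `w·x = (w(x))^` is defined;
(ii) `Φ̂` and `E(Φ)` are stable under this action, and `Φ̂ = W · Δ`;
(iii) consequently `Φ̂ ∪ E(Φ)`, which is the topological closure of `Φ̂`, is stable. -/
theorem statement9 (B : LinearMap.BilinForm ℝ V) (Δ : Module.Basis ι ℝ V)
    (hsymm : ∀ u v : V, B u v = B v u)
    (hdiag : ∀ i : ι, B (Δ i) (Δ i) = 1)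
    (hoff : ∀ i j : ι, i ≠ j → B (Δ i) (Δ j) ≤ -1 ∨
      ∃ k : ℕ, 2 ≤ k ∧ B (Δ i) (Δ j) = -Real.cos (Real.pi / (k : ℝ))) :
    (∀ w ∈ cox B Δ, ∀ x ∈ nPhi B Δ ∪ Eset B Δ, l1 Δ (w x) ≠ 0) ∧
    (∀ w ∈ cox B Δ, ∀ x ∈ nPhi B Δ, nrm Δ (w x) ∈ nPhi B Δ) ∧
    (∀ w ∈ cox B Δ, ∀ x ∈ Eset B Δ, nrm Δ (w x) ∈ Eset B Δ) ∧
    (nPhi B Δ = { y : V | ∃ w ∈ cox B Δ, ∃ i : ι, y = nrm Δ (w (Δ i)) }) ∧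
    (nPhi B Δ ∪ Eset B Δ = closure (nPhi B Δ)) ∧
    (∀ w ∈ cox B Δ, ∀ x ∈ nPhi B Δ ∪ Eset B Δ, nrm Δ (w x) ∈ nPhi B Δ ∪ Eset B Δ) := by
  obtain ⟨r, hr⟩ := exists_simpRefl B Δ hdiag
  have hpn := pos_or_neg B Δ hsymm hdiag hoff
  have heq := nPhi_eq hr hdiag hpn
  have hP : ∀ w ∈ cox B Δ, ∀ x ∈ nPhi B Δ, l1 Δ (w x) ≠ 0 ∧ nrm Δ (w x) ∈ nPhi B Δ := by
    intro w hw x hx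
    rw [heq] at hx ⊢
    obtain ⟨v, hv, i, rfl⟩ := hx
    have hl := root_l1_ne hpn v hv i
    obtain ⟨h1, h2⟩ := comp_step (a := w) hl
    have h3 := root_l1_ne hpn (w * v) (mul_mem hw hv) i
    rw [h1] at h3
    exact ⟨right_ne_zero_of_mul h3, w * v, mul_mem hw hv, i, h2.symm⟩
  have hE : ∀ w ∈ cox B Δ, ∀ x ∈ Eset B Δ, l1 Δ (w x) ≠ 0 ∧ nrm Δ (w x) ∈ Eset B Δ := by
    have hstep := refl_E hr hsymm hdiag hpn hP
    have hmul : ∀ (i : ι) (b : V ≃ₗ[ℝ] V), 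
        (∀ x ∈ Eset B Δ, l1 Δ (b x) ≠ 0 ∧ nrm Δ (b x) ∈ Eset B Δ) →
        ∀ x ∈ Eset B Δ, l1 Δ ((r i * b) x) ≠ 0 ∧ nrm Δ ((r i * b) x) ∈ Eset B Δ := by
      intro i b hb x hx
      obtain ⟨h1, h2⟩ := hb x hx
      obtain ⟨h3, h4⟩ := comp_step (a := r i) h1
      obtain ⟨h5, h6⟩ := hstep i _ h2
      rw [h3, h4]
      exact ⟨mul_ne_zero h1 h5, h6⟩
    intro w hw
    unfold cox at hw
    induction hw using Subgroup.closure_induction_left with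
    | one =>
      intro x hx
      have h := Eset_l1 hx
      have e : (1 : V ≃ₗ[ℝ] V) x = x := rfl
      rw [e, nrm_of_l1 h, h]
      exact ⟨one_ne_zero, hx⟩
    | mul_left a ha b _ hb =>
      obtain ⟨i, rfl⟩ := (simple_mem_iff B Δ hdiag hr a).1 ha
      exact hmul i b hb
    | inv_mul_cancel a ha b _ hb =>
      obtain ⟨i, rfl⟩ := (simple_mem_iff B Δ hdiag hr a).1 ha
      rw [inv_eq_of_mul_eq_one_left (refl_mul_self hr hdiag i)]
      exact hmul i b hb
  refine ⟨?_, fun w hw x hx => (hP w hw x hx).2, fun w hw x hx => (hE w hw x hx).2, heq,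
    (closure_eq_self_union_derivedSet _).symm, ?_⟩
  · rintro w hw x (hx | hx)
    · exact (hP w hw x hx).1
    · exact (hE w hw x hx).1
  · rintro w hw x (hx | hx)
    · exact Or.inl (hP w hw x hx).2
    · exact Or.inr (hE w hw x hx).2
end
end

section
/- For every x ∈ E(Φ) and every w ∈ W, one has |w(x)|₁ > 0; that is, E(Φ) is contained in D⁺ = V₁ ∩ ⋂_{w∈W} w(V₀⁺), where V₀⁺ = {v∈V : |v|₁ > 0}. -/
open Filter Topology

noncomputable section

variable {ι V : Type*} [Fintype ι] [NormedAddCommGroup V] [NormedSpace ℝ V]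

namespace CoxAux

/-- Evaluated Chebyshev polynomial. -/
def cu (c : ℝ) (k : ℤ) : ℝ := (Polynomial.Chebyshev.U ℝ k).eval c

lemma cu_add_one (c : ℝ) (k : ℤ) : cu c (k + 1) = 2 * c * cu c k - cu c (k - 1) := by
  simp [cu, Polynomial.Chebyshev.U_add_one]

lemma cu_neg (c : ℝ) (k : ℤ) : cu c (-k) = - cu c (k - 2) := by
  simp [cu, Polynomial.Chebyshev.U_neg]

lemma cu_zero (c : ℝ) : cu c 0 = 1 := by simp [cu]

lemma cu_neg_one (c : ℝ) : cu c (-1) = 0 := by simp [cu]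

lemma cu_big (c : ℝ) (hc : 1 ≤ c) (n : ℕ) : 0 ≤ cu c ((n : ℤ) - 1) ∧ cu c ((n : ℤ) - 1) ≤ cu c n := by
  induction n with
  | zero => simp [cu_zero, cu_neg_one]
  | succ n ih =>
    have h := cu_add_one c n
    push_cast
    rw [add_sub_cancel_right, h]
    refine ⟨by linarith [ih.1, ih.2], ?_⟩
    nlinarith [ih.1, ih.2, mul_nonneg (sub_nonneg.2 hc) (ih.1.trans ih.2)]

lemma cu_mul_big (c : ℝ) (hc : 1 ≤ c) (k : ℤ) : 0 ≤ cu c k * cu c (k - 1) := by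
  rcases Int.le_total 0 k with hk | hk
  · obtain ⟨n, rfl⟩ := Int.eq_ofNat_of_zero_le hk
    have := cu_big c hc n
    exact mul_nonneg (this.1.trans this.2) this.1
  · obtain ⟨n, hn⟩ := Int.eq_ofNat_of_zero_le (Int.neg_nonneg.2 hk)
    obtain rfl : k = -(n : ℤ) := by omega
    have e : -(n : ℤ) - 1 = -((n : ℤ) + 1) := by ring
    rw [e, cu_neg, cu_neg]
    have e2 : (n : ℤ) + 1 - 2 = n - 1 := by ring
    rw [e2, neg_mul_neg]
    rcases n with _ | n
    · simp [cu_neg_one]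
    · have := cu_big c hc n
      push_cast
      have e3 : (n : ℤ) + 1 - 2 = n - 1 := by ring
      rw [e3, add_sub_cancel_right]
      exact mul_nonneg this.1 (this.1.trans this.2)

lemma sin_mul_sin (m : ℕ) (hm : 2 ≤ m) (k : ℤ) :
    0 ≤ Real.sin ((k + 1) * (Real.pi / m)) * Real.sin (k * (Real.pi / m)) := by
  have hm0 : (0 : ℝ) < m := by positivity
  have hmz : (0 : ℤ) < m := by omega
  have hdiv := Int.emod_add_mul_ediv k m
  set q := k / (m : ℤ)
  set r := k % (m : ℤ)
  have hr0 : 0 ≤ r := Int.emod_nonneg _ hmz.ne'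
  have hr1 : r + 1 ≤ m := Int.emod_lt_of_pos _ hmz
  have hr0' : (0 : ℝ) ≤ r := by exact_mod_cast hr0
  have hr1' : (r : ℝ) + 1 ≤ m := by exact_mod_cast hr1
  have hk : (k : ℝ) = r + m * q := by exact_mod_cast hdiv.symm
  have e1 : ((k : ℝ) + 1) * (Real.pi / m) = (r + 1) * (Real.pi / m) + q * Real.pi := by
    rw [hk]; field_simp; ring
  have e2 : (k : ℝ) * (Real.pi / m) = r * (Real.pi / m) + q * Real.pi := by
    rw [hk]; field_simp
  rw [e1, e2, Real.sin_add_int_mul_pi, Real.sin_add_int_mul_pi]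
  have hp : 0 < Real.pi / m := div_pos Real.pi_pos hm0
  have hmp : (m : ℝ) * (Real.pi / m) = Real.pi := by field_simp
  have s1 : 0 ≤ Real.sin ((r + 1) * (Real.pi / m)) := by
    apply Real.sin_nonneg_of_nonneg_of_le_pi (by positivity)
    nlinarith
  have s2 : 0 ≤ Real.sin (r * (Real.pi / m)) := by
    apply Real.sin_nonneg_of_nonneg_of_le_pi (by positivity)
    nlinarith
  have : (-1 : ℝ) ^ q * Real.sin ((r + 1) * (Real.pi / m)) * ((-1) ^ q * Real.sin (r * (Real.pi / m)))
    = ((-1 : ℝ) ^ q) ^ 2 * (Real.sin ((r + 1) * (Real.pi / m)) * Real.sin (r * (Real.pi / m))) := by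
    ring
  rw [this]
  positivity

lemma cu_mul_cos (m : ℕ) (hm : 2 ≤ m) (k : ℤ) :
    0 ≤ cu (Real.cos (Real.pi / m)) k * cu (Real.cos (Real.pi / m)) (k - 1) := by
  have h1 := Polynomial.Chebyshev.U_real_cos (Real.pi / m) k
  have h2 := Polynomial.Chebyshev.U_real_cos (Real.pi / m) (k - 1)
  have h := sin_mul_sin m hm k
  have hs : 0 < Real.sin (Real.pi / m) := by
    have : (2 : ℝ) ≤ m := by exact_mod_cast hm
    apply Real.sin_pos_of_pos_of_lt_pi (by positivity)
    rw [div_lt_iff₀ (by positivity)]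
    nlinarith [Real.pi_pos]
  push_cast at h2
  rw [sub_add_cancel] at h2
  rw [← h1, ← h2] at h
  change 0 ≤ cu _ k * _ * (cu _ (k - 1) * _) at h
  by_contra hneg
  push Not at hneg
  nlinarith [mul_pos hs hs, mul_neg_of_neg_of_pos hneg (mul_pos hs hs)]

/-- Simple reflection. -/
def r (B : LinearMap.BilinForm ℝ V) (Δ : Module.Basis ι ℝ V) (i : ι) : Module.End ℝ V :=
  LinearMap.id - (2 : ℝ) • (B (Δ i)).smulRight (Δ i)

/-- Product of simple reflections along a word. -/
def P (B : LinearMap.BilinForm ℝ V) (Δ : Module.Basis ι ℝ V) (L : List ι) : Module.End ℝ V :=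
  (L.map (r B Δ)).prod

/-- Nonnegative coordinates. -/
def pos (Δ : Module.Basis ι ℝ V) (v : V) : Prop := ∀ j, 0 ≤ Δ.repr v j

variable {B : LinearMap.BilinForm ℝ V} {Δ : Module.Basis ι ℝ V}

lemma r_apply (i : ι) (u : V) : r B Δ i u = u - (2 * B (Δ i) u) • Δ i := by
  simp [r, smul_smul]

lemma P_nil : P B Δ [] = 1 := rfl
lemma P_cons (i : ι) (L : List ι) : P B Δ (i :: L) = r B Δ i * P B Δ L := by simp [P]
lemma P_append (L M : List ι) : P B Δ (L ++ M) = P B Δ L * P B Δ M := by simp [P]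
lemma P_cons_apply (i : ι) (L : List ι) (u : V) :
    P B Δ (i :: L) u = r B Δ i (P B Δ L u) := by simp [P_cons]

lemma r_r (hdiag : ∀ i : ι, B (Δ i) (Δ i) = 1) (i : ι) : r B Δ i * r B Δ i = 1 := by
  ext u
  simp only [Module.End.mul_apply, r_apply, Module.End.one_apply, map_sub, map_smul, hdiag,
    smul_eq_mul]
  module

lemma B_r (hsymm : ∀ u v : V, B u v = B v u) (hdiag : ∀ i : ι, B (Δ i) (Δ i) = 1) (i : ι)
    (u v : V) : B (r B Δ i u) (r B Δ i v) = B u v := by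
  simp only [r_apply, map_sub, map_smul, LinearMap.sub_apply, LinearMap.smul_apply, hdiag,
    smul_eq_mul, hsymm u (Δ i)]
  ring

lemma B_P (hsymm : ∀ u v : V, B u v = B v u) (hdiag : ∀ i : ι, B (Δ i) (Δ i) = 1) (L : List ι)
    (u v : V) : B (P B Δ L u) (P B Δ L v) = B u v := by
  induction L with
  | nil => simp [P_nil]
  | cons i L ih => rw [P_cons_apply, P_cons_apply, B_r hsymm hdiag, ih]

lemma repr_r (i j : ι) (h : j ≠ i) (v : V) : Δ.repr (r B Δ i v) j = Δ.repr v j := by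
  simp [r_apply, h.symm]

lemma simple_perm (hdiag : ∀ i : ι, B (Δ i) (Δ i) = 1) (i : ι) (v : V)
    (hv : pos Δ v) (hB : B v v = 1) (hn : pos Δ (-(r B Δ i v))) : v = Δ i := by
  have h0 : ∀ j, j ≠ i → Δ.repr v j = 0 := by
    intro j hj
    have := hn j
    rw [map_neg, Finsupp.neg_apply, repr_r i j hj] at this
    linarith [hv j]
  have hv' : v = (Δ.repr v i) • Δ i := by
    conv_lhs => rw [← Δ.sum_repr v]
    exact Finset.sum_eq_single i (fun j _ hj => by rw [h0 j hj, zero_smul]) (by simp)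
  have hc := hv i
  generalize Δ.repr v i = c at hv' hc
  subst hv'
  simp [hdiag] at hB
  have : c = 1 := by nlinarith
  rw [this, one_smul]

lemma not_neg (i : ι) : ¬ pos Δ (-(Δ i)) := by
  intro h
  have := h i
  simp at this
  linarith

/-- Sign dichotomy for words of length at most `n`. -/
def Q (B : LinearMap.BilinForm ℝ V) (Δ : Module.Basis ι ℝ V) (n : ℕ) : Prop :=
  ∀ L : List ι, L.length ≤ n → ∀ s, pos Δ (P B Δ L (Δ s)) ∨ pos Δ (-(P B Δ L (Δ s)))

lemma exch (hsymm : ∀ u v : V, B u v = B v u) (hdiag : ∀ i : ι, B (Δ i) (Δ i) = 1) {n : ℕ}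
    (hQ : Q B Δ n) (s : ι) (L : List ι) (hL : L.length ≤ n)
    (hneg : pos Δ (-(P B Δ L (Δ s)))) :
    ∃ L' : List ι, L'.length + 1 = L.length ∧ P B Δ L' = P B Δ L * r B Δ s := by
  induction L with
  | nil => exact absurd hneg (not_neg s)
  | cons i L ih =>
    simp only [List.length_cons] at hL
    rcases hQ L (by omega) s with h | h
    · rw [P_cons_apply] at hneg
      have hv := simple_perm hdiag i _ h (by rw [B_P hsymm hdiag, hdiag]) hneg
      refine ⟨L, rfl, ?_⟩
      have : P B Δ L * r B Δ s = r B Δ i * P B Δ L := by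
        ext u
        simp only [Module.End.mul_apply, r_apply, map_sub, map_smul]
        rw [← hv, B_P hsymm hdiag]
      rw [P_cons, mul_assoc, this, ← mul_assoc, r_r hdiag, one_mul]
    · obtain ⟨L', h1, h2⟩ := ih (by omega) h
      exact ⟨i :: L', by simp [h1], by rw [P_cons, P_cons, h2, mul_assoc]⟩

lemma dihedral (hsymm : ∀ u v : V, B u v = B v u) (hdiag : ∀ i : ι, B (Δ i) (Δ i) = 1)
    (s t : ι) (D : List ι) (hD : ∀ i ∈ D, i = s ∨ i = t) :
    ∃ k : ℤ, P B Δ D (Δ s) = cu (-B (Δ s) (Δ t)) k • Δ s + cu (-B (Δ s) (Δ t)) (k - 1) • Δ t ∨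
      P B Δ D (Δ s) = cu (-B (Δ s) (Δ t)) (k - 1) • Δ s + cu (-B (Δ s) (Δ t)) k • Δ t := by
  induction D with
  | nil => exact ⟨0, Or.inl (by simp [P_nil, cu_zero, cu_neg_one])⟩
  | cons i D ih =>
    obtain ⟨k, hk⟩ := ih (fun j hj => hD j (List.mem_cons_of_mem _ hj))
    have e1 := cu_add_one (-B (Δ s) (Δ t)) k
    have e2 := cu_add_one (-B (Δ s) (Δ t)) (k - 1)
    rw [sub_add_cancel] at e2
    have e3 : cu (-B (Δ s) (Δ t)) (k - 1 - 1) =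
      2 * (-B (Δ s) (Δ t)) * cu (-B (Δ s) (Δ t)) (k - 1) - cu (-B (Δ s) (Δ t)) k := by linarith
    rcases hD i List.mem_cons_self with rfl | rfl
    · rcases hk with hk | hk
      · refine ⟨k - 1, Or.inr ?_⟩
        rw [P_cons_apply, hk, e3]
        simp only [r_apply, map_add, map_smul, hdiag, smul_eq_mul]
        module
      · refine ⟨k + 1, Or.inl ?_⟩
        rw [P_cons_apply, hk, e1, add_sub_cancel_right]
        simp only [r_apply, map_add, map_smul, hdiag, smul_eq_mul]
        module
    · rcases hk with hk | hk
      · refine ⟨k + 1, Or.inr ?_⟩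
        rw [P_cons_apply, hk, e1, add_sub_cancel_right]
        simp only [r_apply, map_add, map_smul, hdiag, smul_eq_mul, hsymm (Δ i) (Δ s)]
        module
      · refine ⟨k - 1, Or.inl ?_⟩
        rw [P_cons_apply, hk, e3]
        simp only [r_apply, map_add, map_smul, hdiag, smul_eq_mul, hsymm (Δ i) (Δ s)]
        module

lemma pos_comb {u v : V} (hu : pos Δ u) (hv : pos Δ v) {a b : ℝ} (hab : 0 ≤ a * b) :
    pos Δ (a • u + b • v) ∨ pos Δ (-(a • u + b • v)) := by
  rcases mul_nonneg_iff.1 hab with ⟨ha, hb⟩ | ⟨ha, hb⟩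
  · left
    intro j
    simpa using add_nonneg (mul_nonneg ha (hu j)) (mul_nonneg hb (hv j))
  · right
    intro j
    have h1 := mul_nonneg (neg_nonneg.2 ha) (hu j)
    have h2 := mul_nonneg (neg_nonneg.2 hb) (hv j)
    simp
    linarith

lemma Q_all (hsymm : ∀ u v : V, B u v = B v u)
    (hdiag : ∀ i : ι, B (Δ i) (Δ i) = 1)
    (hoff : ∀ i j : ι, i ≠ j → B (Δ i) (Δ j) ≤ -1 ∨
      ∃ k : ℕ, 2 ≤ k ∧ B (Δ i) (Δ j) = -Real.cos (Real.pi / (k : ℝ))) (n : ℕ) : Q B Δ n := by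
  induction n with
  | zero =>
    intro L hL s
    obtain rfl : L = [] := List.length_eq_zero_iff.1 (by omega)
    left
    intro j
    classical
    simp only [P_nil, Module.End.one_apply, Module.Basis.repr_self, Finsupp.single_apply]
    split_ifs <;> norm_num
  | succ n ih =>
    intro L hL s
    rcases Nat.lt_or_ge n L.length with hlt | hge
    swap
    · exact ih L hge s
    rcases List.eq_nil_or_concat L with rfl | ⟨L0, t, rfl⟩
    · simp at hlt
    simp only [List.concat_eq_append] at *
    simp only [List.length_append, List.length_singleton] at hL hlt
    have hPt : P B Δ [t] = r B Δ t := by simp [P]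
    by_cases hts : s = t
    · subst hts
      have : P B Δ (L0 ++ [s]) (Δ s) = -(P B Δ L0 (Δ s)) := by
        rw [P_append, Module.End.mul_apply, hPt, r_apply, hdiag, ← map_neg]
        congr 1
        module
      rw [this, neg_neg]
      exact (ih L0 (by omega) s).symm
    · classical
      let S : ℕ → Prop := fun k => ∃ M D : List ι, M.length = k ∧ (∀ i ∈ D, i = s ∨ i = t) ∧
        P B Δ (L0 ++ [t]) = P B Δ M * P B Δ D
      have hS : ∃ k, S k := ⟨L0.length, L0, [t], rfl, by simp, P_append _ _⟩
      have hmin : Nat.find hS ≤ L0.length := Nat.find_min' hS ⟨L0, [t], rfl, by simp, P_append _ _⟩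
      obtain ⟨M, D, hM, hD, hP⟩ := Nat.find_spec hS
      have key : ∀ i, (i = s ∨ i = t) → pos Δ (P B Δ M (Δ i)) := by
        intro i hi
        rcases ih M (by omega) i with h | h
        · exact h
        · exfalso
          obtain ⟨M', h1, h2⟩ := exch hsymm hdiag ih i M (by omega) h
          refine Nat.find_min hS (m := M'.length) (by omega) ⟨M', i :: D, rfl, ?_, ?_⟩
          · intro j hj
            rcases List.mem_cons.1 hj with rfl | hj
            · exact hi
            · exact hD j hj
          · rw [h2, P_cons, hP, mul_assoc, ← mul_assoc (r B Δ i), r_r hdiag, one_mul]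
      have hcu : ∀ k, 0 ≤ cu (-B (Δ s) (Δ t)) k * cu (-B (Δ s) (Δ t)) (k - 1) := by
        intro k
        rcases hoff s t hts with h | ⟨m, hm, h⟩
        · exact cu_mul_big _ (by linarith) k
        · rw [h, neg_neg]
          exact cu_mul_cos m hm k
      rw [hP, Module.End.mul_apply]
      obtain ⟨k, hk | hk⟩ := dihedral hsymm hdiag s t D hD
      · rw [hk, map_add, map_smul, map_smul]
        exact pos_comb (key s (Or.inl rfl)) (key t (Or.inr rfl)) (hcu k)
      · rw [hk, map_add, map_smul, map_smul]
        exact pos_comb (key s (Or.inl rfl)) (key t (Or.inr rfl)) (by rw [mul_comm]; exact hcu k)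

lemma P_reverse (hdiag : ∀ i : ι, B (Δ i) (Δ i) = 1) (L : List ι) :
    P B Δ L.reverse * P B Δ L = 1 := by
  induction L with
  | nil => simp [P_nil]
  | cons i L ih =>
    have hPt : P B Δ [i] = r B Δ i := by simp [P]
    rw [List.reverse_cons, P_append, hPt, P_cons, mul_assoc, ← mul_assoc (r B Δ i), r_r hdiag,
      one_mul, ih]

lemma cox_word (hdiag : ∀ i : ι, B (Δ i) (Δ i) = 1) (w : V ≃ₗ[ℝ] V) (hw : w ∈ cox B Δ) :
    ∃ L : List ι, ∀ u, w u = P B Δ L u := by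
  induction hw using Subgroup.closure_induction with
  | mem x hx =>
    obtain ⟨i, hi⟩ := hx
    exact ⟨[i], fun u => by rw [hi, hdiag]; simp [P, r_apply]⟩
  | one => exact ⟨[], fun u => by simp [P_nil]⟩
  | mul x y _ _ hx hy =>
    obtain ⟨L, hL⟩ := hx
    obtain ⟨M, hM⟩ := hy
    exact ⟨L ++ M, fun u => by rw [P_append, Module.End.mul_apply, ← hM, ← hL]; rfl⟩
  | inv x _ hx =>
    obtain ⟨L, hL⟩ := hx
    refine ⟨L.reverse, fun u => ?_⟩
    have h := hL (x⁻¹ u)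
    have h2 : x (x⁻¹ u) = u := x.apply_symm_apply u
    rw [h2] at h
    conv_rhs => rw [h]
    rw [← Module.End.mul_apply, P_reverse hdiag, Module.End.one_apply]

lemma bad_finite (hsymm : ∀ u v : V, B u v = B v u)
    (hdiag : ∀ i : ι, B (Δ i) (Δ i) = 1)
    (hoff : ∀ i j : ι, i ≠ j → B (Δ i) (Δ j) ≤ -1 ∨
      ∃ k : ℕ, 2 ≤ k ∧ B (Δ i) (Δ j) = -Real.cos (Real.pi / (k : ℝ))) (L : List ι) :
    {ρ ∈ posPhi B Δ | ¬ pos Δ (P B Δ L ρ)}.Finite := by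
  induction L with
  | nil =>
    convert Set.finite_empty
    ext ρ
    simp only [Set.mem_setOf_eq, Set.mem_empty_iff_false, iff_false, not_and, not_not]
    intro h
    exact h.2
  | cons i L ih =>
    refine (ih.union (Set.finite_singleton (P B Δ L.reverse (Δ i)))).subset ?_
    rintro ρ ⟨hρ, hn⟩
    by_cases hp : pos Δ (P B Δ L ρ)
    · right
      obtain ⟨w, hw, s, hs⟩ := hρ.1
      obtain ⟨M, hM⟩ := cox_word hdiag w hw
      rw [hM] at hs
      have h1 := Q_all hsymm hdiag hoff _ ((i :: L) ++ M) le_rfl s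
      rw [P_append, Module.End.mul_apply, hs] at h1
      have h2 := h1.resolve_left hn
      rw [P_cons_apply] at h2
      have := simple_perm hdiag i _ hp (by rw [B_P hsymm hdiag, ← hs, B_P hsymm hdiag, hdiag]) h2
      rw [Set.mem_singleton_iff, ← this, ← Module.End.mul_apply, P_reverse hdiag,
        Module.End.one_apply]
    · left
      exact ⟨hρ, hp⟩

lemma l1_pos {v : V} (hv : pos Δ v) (h0 : v ≠ 0) : 0 < l1 Δ v := by
  refine lt_of_le_of_ne (Finset.sum_nonneg fun i _ => hv i) fun h => h0 ?_
  have := (Finset.sum_eq_zero_iff_of_nonneg (fun i _ => hv i)).1 h.symm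
  rw [← Δ.sum_repr v]
  exact Finset.sum_eq_zero fun i hi => by rw [this i hi, zero_smul]

lemma l1_smul (c : ℝ) (v : V) : l1 Δ (c • v) = c * l1 Δ v := by
  simp [l1, Finset.mul_sum]

end CoxAux

/-- For every `x ∈ E(Φ)` and every `w ∈ W`, one has `|w(x)|₁ > 0`; that is, `E(Φ)` is
contained in `D⁺ = V₁ ∩ ⋂_{w ∈ W} w(V₀⁺)` where `V₀⁺ = {v | |v|₁ > 0}`. -/
theorem statement10 (B : LinearMap.BilinForm ℝ V) (Δ : Module.Basis ι ℝ V)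
    (hsymm : ∀ u v : V, B u v = B v u)
    (hdiag : ∀ i : ι, B (Δ i) (Δ i) = 1)
    (hoff : ∀ i j : ι, i ≠ j → B (Δ i) (Δ j) ≤ -1 ∨
      ∃ k : ℕ, 2 ≤ k ∧ B (Δ i) (Δ j) = -Real.cos (Real.pi / (k : ℝ))) :
    ∀ x ∈ Eset B Δ, l1 Δ x = 1 ∧ ∀ w ∈ cox B Δ, 0 < l1 Δ (w x) := by
  intro x hx
  have hfd : FiniteDimensional ℝ V := Module.Finite.of_basis Δ
  have main : ∀ w ∈ cox B Δ, l1 Δ x = 1 ∧ CoxAux.pos Δ (w x) := by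
    intro w hw
    obtain ⟨L, hL⟩ := CoxAux.cox_word hdiag w hw
    have hfin := CoxAux.bad_finite hsymm hdiag hoff L
    set bad := nrm Δ '' {ρ ∈ posPhi B Δ | ¬ CoxAux.pos Δ (CoxAux.P B Δ L ρ)}
    have hbad : (bad \ {x}).Finite := (hfin.image _).sdiff
    have hfreq := accPt_iff_frequently.1 hx
    have hev : ∀ᶠ y in 𝓝 x, y ∉ bad \ {x} :=
      hbad.isClosed.isOpen_compl.mem_nhds (by simp)
    have hcl : IsClosed {y | l1 Δ y = 1 ∧ CoxAux.pos Δ (w y)} := by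
      have hc : ∀ i, Continuous fun y : V => Δ.repr y i := fun i =>
        (Δ.coord i).continuous_of_finiteDimensional
      have hw' : Continuous fun y : V => w y :=
        (w : V →ₗ[ℝ] V).continuous_of_finiteDimensional
      refine IsClosed.inter (isClosed_eq ?_ continuous_const) ?_
      · exact continuous_finsetSum _ fun i _ => hc i
      · change IsClosed {y | ∀ i, 0 ≤ Δ.repr (w y) i}
        rw [Set.setOf_forall]
        exact isClosed_iInter fun i => isClosed_le continuous_const ((hc i).comp hw')
    have hmem : x ∈ closure {y | l1 Δ y = 1 ∧ CoxAux.pos Δ (w y)} := by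
      rw [mem_closure_iff_frequently]
      refine (hfreq.and_eventually hev).mono ?_
      rintro y ⟨⟨hyx, ρ, hρ, rfl⟩, hyb⟩
      have hρ0 : ρ ≠ 0 := by
        obtain ⟨v, -, s, hs⟩ := hρ.1
        rw [← hs]
        exact (map_ne_zero_iff v v.injective).2 (Δ.ne_zero s)
      have hl := CoxAux.l1_pos hρ.2 hρ0
      refine ⟨?_, ?_⟩
      · rw [nrm, CoxAux.l1_smul, inv_mul_cancel₀ hl.ne']
      · have hp : CoxAux.pos Δ (w ρ) := by
          by_contra hp
          rw [hL] at hp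
          exact hyb ⟨⟨ρ, ⟨hρ, hp⟩, rfl⟩, hyx⟩
        intro j
        have : 0 ≤ (l1 Δ ρ)⁻¹ * Δ.repr (w ρ) j := mul_nonneg (inv_nonneg.2 hl.le) (hp j)
        simpa [nrm] using this
    rw [hcl.closure_eq] at hmem
    exact hmem
  have h1 : l1 Δ x = 1 := (main 1 (one_mem _)).1
  refine ⟨h1, fun w hw => CoxAux.l1_pos (main w hw).2 ?_⟩
  rw [map_ne_zero_iff w w.injective]
  rintro rfl
  simp [l1] at h1
end
end

section
/- Let ρ ∈ Φ and let x ∈ Q ∩ V₁ be such that w(x) ∉ V₀ for every w ∈ W (so that s_ρ·x = (s_ρ(x))^ is defined). Let L(ρ̂, x) denote the affine line through ρ̂ and x (note ρ̂ ≠ x since B(ρ̂,ρ̂) ≠ 0 = B(x,x)). Then: (a) if B(ρ,x) = 0, then L(ρ̂,x) ∩ Q = {x} and s_ρ·x = x; (b) if B(ρ,x) ≠ 0, then s_ρ·x ≠ x and L(ρ̂,x) ∩ Q = {x, s_ρ·x}. -/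
open Filter Topology

noncomputable section

variable {ι V : Type*} [Fintype ι] [NormedAddCommGroup V] [NormedSpace ℝ V]

/-- The affine line through two points `a` and `b`. -/
def lineThrough (a b : V) : Set V := { y : V | ∃ t : ℝ, y = a + t • (b - a) }

/-- The `B`-reflection formula: `s_ρ(x) = x - 2 (B ρ x / B ρ ρ) • ρ`. -/
def reflAt (B : LinearMap.BilinForm ℝ V) (ρ x : V) : V := x - (2 * B ρ x / B ρ ρ) • ρ

/-- Words of length at most `n` in the letters `s i`, `i ∈ S`. -/
inductive Wd {G I : Type*} [Group G] (s : I → G) (S : Set I) : ℕ → G → Prop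
  | one (n : ℕ) : Wd s S n 1
  | cons (n : ℕ) (w : G) (i : I) (hi : i ∈ S) (h : Wd s S n w) : Wd s S (n + 1) (s i * w)

theorem Wd.mono {G I : Type*} [Group G] {s : I → G} {S S' : Set I} (hS : S ⊆ S') {n : ℕ} {w : G}
    (h : Wd s S n w) : ∀ {m : ℕ}, n ≤ m → Wd s S' m w := by
  induction h with
  | one n => intro m _; exact Wd.one m
  | cons n w i hi h ih =>
    intro m hm
    obtain ⟨m, rfl⟩ : ∃ q, m = q + 1 := ⟨m - 1, by omega⟩
    exact Wd.cons m w i (hS hi) (ih (by omega))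

theorem Wd.mul {G I : Type*} [Group G] {s : I → G} {S : Set I} {n m : ℕ} {w v : G}
    (h : Wd s S n w) (h' : Wd s S m v) : Wd s S (n + m) (w * v) := by
  induction h with
  | one n => rw [one_mul]; exact h'.mono subset_rfl (by omega)
  | cons n w i hi h ih =>
    rw [mul_assoc, show n + 1 + m = (n + m) + 1 by omega]
    exact Wd.cons _ _ i hi ih

theorem Wd.single {G I : Type*} [Group G] {s : I → G} {S : Set I} {i : I} (hi : i ∈ S) :
    Wd s S 1 (s i) := by
  have := Wd.cons 0 1 i hi (Wd.one (s := s) (S := S) 0)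
  simpa using this

theorem Wd.inv {G I : Type*} [Group G] {s : I → G} (hs : ∀ i, s i * s i = 1)
    {S : Set I} {n : ℕ} {w : G}
    (h : Wd s S n w) : Wd s S n w⁻¹ := by
  induction h with
  | one n => rw [inv_one]; exact Wd.one n
  | cons n w i hi h ih =>
    rw [mul_inv_rev, inv_eq_of_mul_eq_one_right (hs i)]
    exact ih.mul (Wd.single hi)

theorem Wd.last {G I : Type*} [Group G] {s : I → G} (hs : ∀ i, s i * s i = 1)
    {S : Set I} {n : ℕ} {w : G} (h : Wd s S n w) (hw : w ≠ 1) :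
    ∃ i ∈ S, ∃ m, n = m + 1 ∧ Wd s S m (w * s i) := by
  have h1 := h.inv hs
  generalize hv : w⁻¹ = v at h1
  cases h1 with
  | one => exact absurd (inv_eq_one.mp hv) hw
  | cons m v i hi h' =>
    refine ⟨i, hi, m, rfl, ?_⟩
    have : w * s i = v⁻¹ := by
      rw [← inv_inv w, hv, mul_inv_rev, mul_assoc, inv_mul_cancel, mul_one]
    rw [this]; exact h'.inv hs

section dih
variable {G I : Type*} [Group G] {s : I → G} (hs : ∀ i, s i * s i = 1) (i j : I)
include hs

theorem dih_conj (p : ℤ) : s j * (s i * s j) ^ p = (s i * s j) ^ (-p) * s j := by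
  have hi' : (s i)⁻¹ = s i := inv_eq_of_mul_eq_one_right (hs i)
  have hj' : (s j)⁻¹ = s j := inv_eq_of_mul_eq_one_right (hs j)
  have h : SemiconjBy (s j) (s i * s j) (s i * s j)⁻¹ := by
    unfold SemiconjBy
    rw [mul_inv_rev, hi', hj', mul_assoc]
  have := h.zpow_right p
  rw [inv_zpow'] at this
  exact this

theorem dih_sT (p : ℤ) : s i * (s i * s j) ^ p = s j * (s i * s j) ^ (p - 1) := by
  rw [show p = 1 + (p - 1) by ring, zpow_add, zpow_one]
  rw [show (1 + (p - 1) - 1) = p - 1 by ring]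
  rw [← mul_assoc, ← mul_assoc, hs, one_mul]

theorem dih_st (p : ℤ) : s i * (s j * (s i * s j) ^ p) = (s i * s j) ^ (p + 1) := by
  rw [add_comm, zpow_add, zpow_one, mul_assoc]

theorem dih_Ts (p : ℤ) : (s i * s j) ^ p * s i = s j * (s i * s j) ^ (-p - 1) := by
  rw [← dih_sT hs]
  have hi' : (s i)⁻¹ = s i := inv_eq_of_mul_eq_one_right (hs i)
  have hj' : (s j)⁻¹ = s j := inv_eq_of_mul_eq_one_right (hs j)
  have h : SemiconjBy (s i) (s i * s j) (s i * s j)⁻¹ := by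
    unfold SemiconjBy
    rw [mul_inv_rev, hi', hj', ← mul_assoc, hs, one_mul, mul_assoc, hs, mul_one]
  have := h.zpow_right (-p)
  rw [inv_zpow', neg_neg] at this
  exact this.symm

theorem dih_tTs (p : ℤ) : s j * (s i * s j) ^ p * s i = (s i * s j) ^ (-p - 1) := by
  rw [mul_assoc, dih_Ts hs, ← mul_assoc, hs, one_mul]

theorem dih_word_aux (p : ℕ) : Wd s {i, j} (2 * p) ((s i * s j) ^ (p : ℤ)) := by
  induction p with
  | zero => simpa using Wd.one 0
  | succ p ih =>
    push_cast
    rw [← dih_st hs]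
    exact Wd.cons _ _ i (by simp) (Wd.cons _ _ j (by simp) ih)

theorem dih_word (p : ℤ) : Wd s {i, j} (2 * p.natAbs) ((s i * s j) ^ p) := by
  rcases Int.natAbs_eq p with h | h
  · conv => arg 4; rw [h]
    exact dih_word_aux hs i j _
  · conv => arg 4; rw [h, zpow_neg]
    exact (dih_word_aux hs i j _).inv hs

theorem dih_word' (p : ℤ) : Wd s {i, j} ((2 * p + 1).natAbs) (s j * (s i * s j) ^ p) := by
  rcases le_or_gt 0 p with h | h
  · exact (Wd.cons _ _ j (by simp) (dih_word hs i j p)).mono subset_rfl (by omega)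
  · have := dih_sT hs i j (p + 1)
    rw [add_sub_cancel_right] at this
    rw [← this]
    exact (Wd.cons _ _ i (by simp) (dih_word hs i j (p + 1))).mono subset_rfl (by omega)

theorem dih_nf {n : ℕ} {w : G} (h : Wd s {i, j} n w) :
    (∃ p : ℤ, 2 * p.natAbs ≤ n ∧ w = (s i * s j) ^ p) ∨
    (∃ p : ℤ, (2 * p + 1).natAbs ≤ n ∧ w = s j * (s i * s j) ^ p) := by
  induction h with
  | one n => exact Or.inl ⟨0, by simp, by simp⟩
  | cons n w l hl h ih =>
    rcases hl with rfl | hl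
    · rcases ih with ⟨p, hp, rfl⟩ | ⟨p, hp, rfl⟩
      · exact Or.inr ⟨p - 1, by omega, dih_sT hs _ _ p⟩
      · exact Or.inl ⟨p + 1, by omega, dih_st hs _ _ p⟩
    · obtain rfl : l = j := hl
      rcases ih with ⟨p, hp, rfl⟩ | ⟨p, hp, rfl⟩
      · exact Or.inr ⟨p, by omega, rfl⟩
      · exact Or.inl ⟨p, by omega, by rw [← mul_assoc, hs, one_mul]⟩

/-- Abstract rank two statement. -/
theorem dih_main (P : G → Prop) (k : ℕ) (hk : k = 0 ∨ (s i * s j) ^ k = 1)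
    (h1 : ∀ p : ℕ, (k = 0 ∨ 2 * p + 1 ≤ k) → P ((s i * s j) ^ p))
    (h2 : ∀ p : ℕ, (k = 0 ∨ 2 * p + 2 ≤ k) → P (s j * (s i * s j) ^ p))
    {n : ℕ} {w : G} (h : Wd s {i, j} n w) : P w ∨ ∃ m < n, Wd s {i, j} m (w * s i) := by
  have hper : ∀ p : ℤ, k = 0 ∨ (s i * s j) ^ p = (s i * s j) ^ (p + k) := by
    intro p
    rcases hk with hk | hk
    · exact Or.inl hk
    · right; rw [zpow_add, zpow_natCast, hk, mul_one]
  rcases dih_nf hs i j h with ⟨p, hp, rfl⟩ | ⟨p, hp, rfl⟩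
  · rw [dih_Ts hs]
    rcases lt_or_ge p 0 with hp0 | hp0
    · exact Or.inr ⟨_, by omega, dih_word' hs i j (-p - 1)⟩
    · lift p to ℕ using hp0
      by_cases hc : k = 0 ∨ 2 * p + 1 ≤ k
      · left; rw [zpow_natCast]; exact h1 p hc
      · push Not at hc
        rw [(hper (-p - 1)).resolve_left hc.1]
        exact Or.inr ⟨_, by omega, dih_word' hs i j _⟩
  · rw [dih_tTs hs]
    rcases lt_or_ge p 0 with hp0 | hp0
    · exact Or.inr ⟨_, by omega, dih_word hs i j (-p - 1)⟩
    · lift p to ℕ using hp0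
      by_cases hc : k = 0 ∨ 2 * p + 2 ≤ k
      · left; rw [zpow_natCast]; exact h2 p hc
      · push Not at hc
        rw [(hper (-p - 1)).resolve_left hc.1]
        exact Or.inr ⟨_, by omega, dih_word hs i j _⟩

end dih

/-- The simple reflection as a linear equivalence. -/
def srefl (B : LinearMap.BilinForm ℝ V) (Δ : Module.Basis ι ℝ V)
    (hdiag : ∀ i : ι, B (Δ i) (Δ i) = 1) (i : ι) : V ≃ₗ[ℝ] V :=
  LinearEquiv.ofInvolutive
    { toFun := fun u => u - (2 * B (Δ i) u) • Δ i
      map_add' := by intro u v; simp only [map_add]; module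
      map_smul' := by intro c u; simp only [map_smul, smul_eq_mul, RingHom.id_apply]; module }
    (by
      intro u
      simp only [LinearMap.coe_mk, AddHom.coe_mk, map_sub, map_smul, smul_eq_mul, hdiag]
      module)

section refl
variable (B : LinearMap.BilinForm ℝ V) (Δ : Module.Basis ι ℝ V)
    (hsymm : ∀ u v : V, B u v = B v u)
    (hdiag : ∀ i : ι, B (Δ i) (Δ i) = 1)

theorem srefl_apply (i : ι) (u : V) : srefl B Δ hdiag i u = u - (2 * B (Δ i) u) • Δ i := rfl

theorem srefl_sq (i : ι) : srefl B Δ hdiag i * srefl B Δ hdiag i = 1 := by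
  ext u
  change srefl B Δ hdiag i (srefl B Δ hdiag i u) = u
  simp only [srefl_apply, map_sub, map_smul, smul_eq_mul, hdiag]
  module

include hsymm in
theorem rank_two (hoff : ∀ i j : ι, i ≠ j → B (Δ i) (Δ j) ≤ -1 ∨
      ∃ k : ℕ, 2 ≤ k ∧ B (Δ i) (Δ j) = -Real.cos (Real.pi / (k : ℝ)))
    (i j : ι) (hij : i ≠ j) {n : ℕ} {w : V ≃ₗ[ℝ] V} (h : Wd (srefl B Δ hdiag) {i, j} n w) :
    (∃ a b : ℝ, 0 ≤ a ∧ 0 ≤ b ∧ w (Δ i) = a • Δ i + b • Δ j) ∨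
      ∃ m < n, Wd (srefl B Δ hdiag) {i, j} m (w * srefl B Δ hdiag i) := by
  set s := srefl B Δ hdiag with hsdef
  have hsi : ∀ (c : ℝ), B (Δ i) (Δ j) = -c → ∀ a b : ℝ,
      s i (a • Δ i + b • Δ j) = (2 * c * b - a) • Δ i + b • Δ j := by
    intro c hc a b
    rw [hsdef, srefl_apply]
    simp only [map_add, map_smul, smul_eq_mul, hdiag, hc]
    module
  have hsj : ∀ (c : ℝ), B (Δ i) (Δ j) = -c → ∀ a b : ℝ,
      s j (a • Δ i + b • Δ j) = a • Δ i + (2 * c * a - b) • Δ j := by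
    intro c hc a b
    rw [hsdef, srefl_apply]
    simp only [map_add, map_smul, smul_eq_mul, hdiag, hsymm (Δ j) (Δ i), hc]
    module
  have hpow : ∀ (p : ℕ) (u : V), ((s i * s j) ^ (p + 1)) u = s i (s j (((s i * s j) ^ p) u)) := by
    intro p u; rw [pow_succ']; rfl
  have hmul : ∀ (p : ℕ) (u : V), (s j * (s i * s j) ^ p) u = s j (((s i * s j) ^ p) u) :=
    fun _ _ => rfl
  rcases hoff i j hij with hc | ⟨k, hk2, hc⟩
  · set c := - B (Δ i) (Δ j) with hcdef
    have hc' : B (Δ i) (Δ j) = -c := by simp [hcdef]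
    have hc1 : 1 ≤ c := by linarith
    have key : ∀ p : ℕ, ∃ a b : ℝ, 0 ≤ b ∧ b ≤ a ∧ ((s i * s j) ^ p) (Δ i) = a • Δ i + b • Δ j := by
      intro p
      induction p with
      | zero => exact ⟨1, 0, by norm_num, by norm_num, by simp⟩
      | succ p ih =>
        obtain ⟨a, b, hb, hab, he⟩ := ih
        refine ⟨_, _, ?_, ?_, by rw [hpow, he, hsj c hc', hsi c hc']⟩
        · nlinarith
        · have : a ≤ 2 * c * a - b := by nlinarith
          nlinarith
    apply dih_main (srefl_sq B Δ hdiag) i j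
      (fun w => ∃ a b : ℝ, 0 ≤ a ∧ 0 ≤ b ∧ w (Δ i) = a • Δ i + b • Δ j) 0 (Or.inl rfl) _ _ h
    · intro p _
      obtain ⟨a, b, hb, hab, he⟩ := key p
      exact ⟨a, b, by linarith, hb, he⟩
    · intro p _
      obtain ⟨a, b, hb, hab, he⟩ := key p
      refine ⟨_, _, ?_, ?_, by rw [hmul, he, hsj c hc']⟩
      · linarith
      · nlinarith
  · set θ := Real.pi / (k : ℝ) with hθ
    have hkpos : (2 : ℝ) ≤ k := by exact_mod_cast hk2
    have hkθ : k * θ = Real.pi := by rw [hθ]; field_simp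
    have hθ0 : 0 < θ := by have := Real.pi_pos; positivity
    have hθ1 : θ < Real.pi := by nlinarith
    have hsin : 0 < Real.sin θ := Real.sin_pos_of_pos_of_lt_pi hθ0 hθ1
    have hrec : ∀ φ : ℝ, 2 * Real.cos θ * Real.sin (φ + θ) - Real.sin φ = Real.sin (φ + 2 * θ) := by
      intro φ
      rw [show φ + 2 * θ = (φ + θ) + θ by ring]
      have : Real.sin φ = Real.sin ((φ + θ) - θ) := by ring_nf
      rw [this, Real.sin_add (φ + θ) θ, Real.sin_sub]; ring
    have hj1 : ∀ φ : ℝ, s j (Real.sin (φ + θ) • Δ i + Real.sin φ • Δ j) =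
        Real.sin (φ + θ) • Δ i + Real.sin (φ + 2 * θ) • Δ j := by
      intro φ; rw [hsj _ hc, hrec]
    have key : ∀ (φ : ℝ) (p : ℕ), ((s i * s j) ^ p) (Real.sin (φ + θ) • Δ i + Real.sin φ • Δ j) =
        Real.sin (φ + 2 * p * θ + θ) • Δ i + Real.sin (φ + 2 * p * θ) • Δ j := by
      intro φ p
      induction p with
      | zero => simp
      | succ p ih =>
        rw [hpow, ih, hj1, hsi _ hc]
        have := hrec (φ + 2 * p * θ + θ)
        rw [show φ + 2 * p * θ + θ + θ = φ + 2 * p * θ + 2 * θ by ring] at this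
        rw [this]
        push_cast
        congr 3 <;> ring_nf
    have hi0 : Δ i = (Real.sin θ)⁻¹ • (Real.sin (0 + θ) • Δ i + Real.sin 0 • Δ j) := by
      rw [zero_add, Real.sin_zero, zero_smul, add_zero, smul_smul, inv_mul_cancel₀ hsin.ne',
        one_smul]
    have hj0 : Δ j = (-(Real.sin θ)⁻¹) • (Real.sin (-θ + θ) • Δ i + Real.sin (-θ) • Δ j) := by
      rw [neg_add_cancel, Real.sin_zero, zero_smul, zero_add, smul_smul, Real.sin_neg,
        neg_mul_neg, inv_mul_cancel₀ hsin.ne', one_smul]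
    have hper : ∀ φ : ℝ, ((s i * s j) ^ k) (Real.sin (φ + θ) • Δ i + Real.sin φ • Δ j) =
        Real.sin (φ + θ) • Δ i + Real.sin φ • Δ j := by
      intro φ
      rw [key, show φ + 2 * k * θ = φ + 2 * Real.pi by rw [← hkθ]; ring,
        show φ + 2 * Real.pi + θ = (φ + θ) + 2 * Real.pi by ring, Real.sin_add_two_pi,
        Real.sin_add_two_pi]
    have hiper : ((s i * s j) ^ k) (Δ i) = Δ i := by
      conv_lhs => rw [hi0]
      rw [map_smul, hper, ← hi0]
    have hjper : ((s i * s j) ^ k) (Δ j) = Δ j := by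
      conv_lhs => rw [hj0]
      rw [map_smul, hper, ← hj0]
    have hfix : ∀ (u : V), B (Δ i) u = 0 → B (Δ j) u = 0 → ∀ p : ℕ, ((s i * s j) ^ p) u = u := by
      intro u hu1 hu2 p
      induction p with
      | zero => simp
      | succ p ih =>
        rw [hpow, ih, hsdef, srefl_apply, srefl_apply]
        simp [hu1, hu2]
    have hone : (s i * s j) ^ k = 1 := by
      ext u
      change ((s i * s j) ^ k) u = u
      set c := Real.cos θ
      set d := (Real.sin θ)^2 with hd
      have hd0 : d ≠ 0 := by positivity
      have hdc : d = 1 - c ^ 2 := by rw [hd, Real.sin_sq]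
      set p := (B (Δ i) u + c * B (Δ j) u) / d with hp
      set q := (B (Δ j) u + c * B (Δ i) u) / d with hq
      have hdp : p - c * q = B (Δ i) u := by
        rw [hp, hq]; field_simp; rw [hdc]; ring
      have hdq : q - c * p = B (Δ j) u := by
        rw [hp, hq]; field_simp; rw [hdc]; ring
      have h3 := hfix (u - (p • Δ i + q • Δ j))
        (by simp only [map_sub, map_add, map_smul, smul_eq_mul, hdiag, hc]; linarith)
        (by simp only [map_sub, map_add, map_smul, smul_eq_mul, hdiag, hsymm (Δ j) (Δ i), hc]
            linarith) k
      rw [map_sub, map_add, map_smul, map_smul, hiper, hjper] at h3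
      exact sub_left_injective h3
    have hpos : ∀ m : ℕ, m ≤ k → 0 ≤ Real.sin (m * θ) := by
      intro m hm
      apply Real.sin_nonneg_of_nonneg_of_le_pi (by positivity)
      rw [← hkθ]
      have : (m : ℝ) ≤ k := by exact_mod_cast hm
      gcongr
    have key2 : ∀ p : ℕ, ((s i * s j) ^ p) (Δ i) = (Real.sin θ)⁻¹ •
        (Real.sin (2 * p * θ + θ) • Δ i + Real.sin (2 * p * θ) • Δ j) := by
      intro p
      conv_lhs => rw [hi0]
      rw [map_smul, key, zero_add]
    apply dih_main (srefl_sq B Δ hdiag) i j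
      (fun w => ∃ a b : ℝ, 0 ≤ a ∧ 0 ≤ b ∧ w (Δ i) = a • Δ i + b • Δ j) k (Or.inr hone) _ _ h
    · intro p hp
      have hp : 2 * p + 1 ≤ k := by omega
      have e1 := hpos (2 * p + 1) hp
      have e2 := hpos (2 * p) (by omega)
      push_cast at e1 e2
      rw [show (2 * (p : ℝ) + 1) * θ = 2 * p * θ + θ by ring] at e1
      exact ⟨_, _, mul_nonneg (inv_nonneg.2 hsin.le) e1, mul_nonneg (inv_nonneg.2 hsin.le) e2,
        by rw [key2, smul_add, smul_smul, smul_smul]⟩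
    · intro p hp
      have hp : 2 * p + 2 ≤ k := by omega
      have e1 := hpos (2 * p + 1) (by omega)
      have e2 := hpos (2 * p + 2) (by omega)
      push_cast at e1 e2
      rw [show (2 * (p : ℝ) + 1) * θ = 2 * p * θ + θ by ring] at e1
      rw [show (2 * (p : ℝ) + 2) * θ = 2 * p * θ + 2 * θ by ring] at e2
      exact ⟨_, _, mul_nonneg (inv_nonneg.2 hsin.le) e1, mul_nonneg (inv_nonneg.2 hsin.le) e2,
        by rw [hmul, key2, map_smul, hj1, smul_add, smul_smul, smul_smul]⟩

include hsymm in
theorem pos_or (hoff : ∀ i j : ι, i ≠ j → B (Δ i) (Δ j) ≤ -1 ∨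
      ∃ k : ℕ, 2 ≤ k ∧ B (Δ i) (Δ j) = -Real.cos (Real.pi / (k : ℝ)))
    (n : ℕ) : ∀ (w : V ≃ₗ[ℝ] V), Wd (srefl B Δ hdiag) Set.univ n w → ∀ i : ι,
      (∀ l, 0 ≤ Δ.repr (w (Δ i)) l) ∨
      ∃ m < n, Wd (srefl B Δ hdiag) Set.univ m (w * srefl B Δ hdiag i) := by
  classical
  induction n using Nat.strong_induction_on with
  | _ n IH =>
  intro w hw i
  have hs := srefl_sq B Δ hdiag
  by_cases hw1 : w = 1
  · left
    intro l
    subst hw1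
    change 0 ≤ Δ.repr (Δ i) l
    rw [Module.Basis.repr_self, Finsupp.single_apply]
    split_ifs <;> norm_num
  obtain ⟨j, -, n', rfl, hwj⟩ := hw.last hs hw1
  by_cases hij : i = j
  · subst hij
    exact Or.inr ⟨n', by omega, hwj⟩
  set s := srefl B Δ hdiag with hsdef
  have hex : ∃ a : ℕ, ∃ b : ℕ, ∃ v u : V ≃ₗ[ℝ] V, a + b ≤ n' + 1 ∧ w = v * u ∧
      Wd s Set.univ a v ∧ Wd s {i, j} b u :=
    ⟨n', 1, w * s j, s j, le_rfl, by rw [mul_assoc, hs, mul_one], hwj, Wd.single (by simp)⟩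
  have hle : Nat.find hex ≤ n' := Nat.find_min' hex
    ⟨1, w * s j, s j, le_rfl, by rw [mul_assoc, hs, mul_one], hwj, Wd.single (by simp)⟩
  obtain ⟨b, v, u, hab, hwvu, hv, hu⟩ := Nat.find_spec hex
  have hmin := fun m => Nat.find_min hex (m := m)
  generalize Nat.find hex = a at *
  have hpos : ∀ l, l = i ∨ l = j → ∀ q, 0 ≤ Δ.repr (v (Δ l)) q := by
    intro l hl
    rcases IH a (by omega) v hv l with h | ⟨m, hm, hvm⟩
    · exact h
    · exfalso
      refine hmin m hm ⟨b + 1, v * s l, s l * u, by omega, ?_, hvm, Wd.cons _ _ _ hl hu⟩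
      rw [mul_assoc, ← mul_assoc (s l), hs, one_mul, hwvu]
  rcases rank_two B Δ hsymm hdiag hoff i j hij hu with ⟨c, d, hc, hd, he⟩ | ⟨m, hm, hum⟩
  · left
    intro l
    have : w (Δ i) = c • v (Δ i) + d • v (Δ j) := by
      rw [hwvu]
      change v (u (Δ i)) = _
      rw [he, map_add, map_smul, map_smul]
    rw [this]
    simp only [map_add, map_smul, Finsupp.add_apply, Finsupp.smul_apply, smul_eq_mul]
    have h1 := hpos i (Or.inl rfl) l
    have h2 := hpos j (Or.inr rfl) l
    positivity
  · right
    refine ⟨a + m, by omega, ?_⟩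
    rw [hwvu, mul_assoc]
    exact hv.mul (hum.mono (Set.subset_univ _) le_rfl)

include hsymm in
theorem pos_or_neg_s11 (hoff : ∀ i j : ι, i ≠ j → B (Δ i) (Δ j) ≤ -1 ∨
      ∃ k : ℕ, 2 ≤ k ∧ B (Δ i) (Δ j) = -Real.cos (Real.pi / (k : ℝ)))
    (n : ℕ) (w : V ≃ₗ[ℝ] V) (hw : Wd (srefl B Δ hdiag) Set.univ n w) (i : ι) :
      (∀ l, 0 ≤ Δ.repr (w (Δ i)) l) ∨ (∀ l, Δ.repr (w (Δ i)) l ≤ 0) := by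
  induction n using Nat.strong_induction_on with
  | _ n IH =>
  rcases pos_or B Δ hsymm hdiag hoff n w hw i with h | ⟨m, hm, hwm⟩
  · exact Or.inl h
  rcases pos_or B Δ hsymm hdiag hoff m _ hwm i with h | ⟨q, hq, hwq⟩
  · right
    have : (w * srefl B Δ hdiag i) (Δ i) = - w (Δ i) := by
      change w (srefl B Δ hdiag i (Δ i)) = _
      rw [srefl_apply, hdiag, ← map_neg]; congr 1; module
    intro l
    have h1 := h l
    rw [this, map_neg, Finsupp.neg_apply] at h1
    linarith
  · rw [mul_assoc, srefl_sq, mul_one] at hwq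
    exact IH q (by omega) hwq

theorem srefl_mem (i : ι) : srefl B Δ hdiag i ∈ cox B Δ :=
  Subgroup.subset_closure ⟨i, fun u => by rw [srefl_apply, hdiag, div_one]⟩

theorem mem_simple {e : V ≃ₗ[ℝ] V} (he : e ∈ simpleReflections B Δ) :
    ∃ i, e = srefl B Δ hdiag i := by
  obtain ⟨i, hi⟩ := he
  exact ⟨i, by ext u; rw [hi, srefl_apply, hdiag, div_one]⟩

theorem cox_word {w : V ≃ₗ[ℝ] V} (hw : w ∈ cox B Δ) :
    ∃ n, Wd (srefl B Δ hdiag) Set.univ n w := by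
  induction hw using Subgroup.closure_induction with
  | mem e he =>
    obtain ⟨i, rfl⟩ := mem_simple B Δ hdiag he
    exact ⟨1, Wd.single (Set.mem_univ _)⟩
  | one => exact ⟨0, Wd.one 0⟩
  | mul x y _ _ hx hy =>
    obtain ⟨n, hn⟩ := hx
    obtain ⟨m, hm⟩ := hy
    exact ⟨_, hn.mul hm⟩
  | inv x _ hx =>
    obtain ⟨n, hn⟩ := hx
    exact ⟨n, hn.inv (srefl_sq B Δ hdiag)⟩

include hsymm hdiag in
theorem cox_inv {w : V ≃ₗ[ℝ] V} (hw : w ∈ cox B Δ) : ∀ u v, B (w u) (w v) = B u v := by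
  obtain ⟨n, hn⟩ := cox_word B Δ hdiag hw
  induction hn with
  | one n => intro u v; rfl
  | cons n w i hi h ih =>
    intro u v
    have hw' : w ∈ cox B Δ := by
      have := (cox B Δ).mul_mem (srefl_mem B Δ hdiag i) hw
      rwa [← mul_assoc, srefl_sq, one_mul] at this
    rw [← ih hw' u v]
    change B (srefl B Δ hdiag i (w u)) (srefl B Δ hdiag i (w v)) = _
    simp only [srefl_apply, map_sub, map_smul, LinearMap.sub_apply, LinearMap.smul_apply,
      smul_eq_mul, hdiag, hsymm (w u) (Δ i)]
    ring

end refl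

theorem l1_comb (Δ : Module.Basis ι ℝ V) (a b : ℝ) (u v : V) :
    l1 Δ (a • u + b • v) = a * l1 Δ u + b * l1 Δ v := by
  simp [l1, Finset.sum_add_distrib, Finset.mul_sum]

/-- Let `ρ ∈ Φ` and `x ∈ Q ∩ V₁` with `w(x) ∉ V₀` for all `w ∈ W`.  Then:
(a) if `B(ρ,x) = 0`, the line `L(ρ̂,x)` meets `Q` only in `x` and `s_ρ·x = x`;
(b) if `B(ρ,x) ≠ 0`, then `s_ρ·x ≠ x` and `L(ρ̂,x) ∩ Q = {x, s_ρ·x}`. -/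
theorem statement11 (B : LinearMap.BilinForm ℝ V) (Δ : Module.Basis ι ℝ V)
    (hsymm : ∀ u v : V, B u v = B v u)
    (hdiag : ∀ i : ι, B (Δ i) (Δ i) = 1)
    (hoff : ∀ i j : ι, i ≠ j → B (Δ i) (Δ j) ≤ -1 ∨
      ∃ k : ℕ, 2 ≤ k ∧ B (Δ i) (Δ j) = -Real.cos (Real.pi / (k : ℝ)))
    (ρ : V) (hρ : ρ ∈ Phi B Δ)
    (x : V) (hxQ : B x x = 0) (hx1 : l1 Δ x = 1)
    (hxD : ∀ w ∈ cox B Δ, l1 Δ (w x) ≠ 0) :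
    (B ρ x = 0 →
      lineThrough (nrm Δ ρ) x ∩ isoQ B = {x} ∧ nrm Δ (reflAt B ρ x) = x) ∧
    (B ρ x ≠ 0 →
      nrm Δ (reflAt B ρ x) ≠ x ∧
      lineThrough (nrm Δ ρ) x ∩ isoQ B = {x, nrm Δ (reflAt B ρ x)}) := by
  obtain ⟨w, hw, i, rfl⟩ := hρ
  have hρρ : B (w (Δ i)) (w (Δ i)) = 1 := by rw [cox_inv B Δ hsymm hdiag hw, hdiag]
  -- the root has nonzero height
  have hr : l1 Δ (w (Δ i)) ≠ 0 := by
    obtain ⟨n, hn⟩ := cox_word B Δ hdiag hw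
    intro h0
    have hz : ∀ l, Δ.repr (w (Δ i)) l = 0 := by
      unfold l1 at h0
      rcases pos_or_neg_s11 B Δ hsymm hdiag hoff n w hn i with h | h
      · intro l
        exact (Finset.sum_eq_zero_iff_of_nonneg (fun l _ => h l)).1 h0 l (Finset.mem_univ l)
      · intro l
        exact (Finset.sum_eq_zero_iff_of_nonpos (fun l _ => h l)).1 h0 l (Finset.mem_univ l)
    have : w (Δ i) = 0 := by
      apply Δ.repr.injective
      ext l
      rw [hz l]; simp
    rw [this] at hρρ
    simp at hρρ
  have hl : l1 Δ (reflAt B (w (Δ i)) x) ≠ 0 := by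
    have hmem := (cox B Δ).mul_mem ((cox B Δ).mul_mem hw (srefl_mem B Δ hdiag i))
      ((cox B Δ).inv_mem hw)
    have h1 := hxD _ hmem
    have h2 : (w * srefl B Δ hdiag i * w⁻¹) x = reflAt B (w (Δ i)) x := by
      change w (srefl B Δ hdiag i (w⁻¹ x)) = _
      have hx' : w (w⁻¹ x) = x := w.apply_symm_apply x
      rw [srefl_apply, map_sub, map_smul, hx', reflAt, hρρ, div_one,
        ← cox_inv B Δ hsymm hdiag hw, hx']
    rwa [h2] at h1
  generalize w (Δ i) = ρ at *
  have hrefl : reflAt B ρ x = (1 : ℝ) • x + (-(2 * B ρ x)) • ρ := by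
    rw [reflAt, hρρ, div_one]; module
  have hlam : l1 Δ (reflAt B ρ x) = 1 - 2 * B ρ x * l1 Δ ρ := by
    rw [hrefl, l1_comb, hx1]; ring
  set b := B ρ x with hb
  set r := l1 Δ ρ with hrdef
  set lam := l1 Δ (reflAt B ρ x) with hlamdef
  have hpt : ∀ t : ℝ, nrm Δ ρ + t • (x - nrm Δ ρ) = ((1 - t) / r) • ρ + t • x := by
    intro t
    rw [nrm, ← hrdef, div_eq_mul_inv]; module
  have hB : ∀ p q : ℝ, B (p • ρ + q • x) (p • ρ + q • x) = p * (p + 2 * q * b) := by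
    intro p q
    simp only [map_add, map_smul, LinearMap.add_apply, LinearMap.smul_apply, smul_eq_mul, hρρ,
      hxQ, hsymm x ρ, ← hb]
    ring
  have hxmem : x ∈ lineThrough (nrm Δ ρ) x ∩ isoQ B := ⟨⟨1, by module⟩, hxQ⟩
  have hcase : ∀ y ∈ lineThrough (nrm Δ ρ) x ∩ isoQ B, y = x ∨
      ∃ t : ℝ, t ≠ 1 ∧ y = ((1 - t) / r) • ρ + t • x ∧ (1 - t) / r + 2 * t * b = 0 := by
    rintro y ⟨⟨t, rfl⟩, hyQ⟩
    by_cases ht : t = 1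
    · left; subst ht; module
    · right
      refine ⟨t, ht, hpt t, ?_⟩
      rw [hpt] at hyQ
      have h3 : (1 - t) / r * ((1 - t) / r + 2 * t * b) = 0 := by rw [← hB]; exact hyQ
      exact (mul_eq_zero.1 h3).resolve_left (div_ne_zero (sub_ne_zero.2 (Ne.symm ht)) hr)
  constructor
  · intro hb0
    constructor
    · apply Set.Subset.antisymm
      · intro y hy
        rcases hcase y hy with h | ⟨t, ht, -, h⟩
        · exact h
        · exfalso
          rw [hb0, mul_zero, add_zero] at h
          exact div_ne_zero (sub_ne_zero.2 (Ne.symm ht)) hr h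
      · rintro y rfl; exact hxmem
    · rw [nrm, ← hlamdef, hlam, hrefl, hb0]; simp
  · intro hb0
    have hn : nrm Δ (reflAt B ρ x) = ((1 - lam⁻¹) / r) • ρ + lam⁻¹ • x := by
      have : (1 - lam⁻¹) / r = lam⁻¹ * (-(2 * b)) := by
        field_simp; rw [hlam]; ring
      rw [this, nrm, ← hlamdef, hrefl]; module
    have hp : (1 - lam⁻¹) / r + 2 * lam⁻¹ * b = 0 := by
      field_simp; rw [hlam]; ring
    constructor
    · intro h
      have h4 : B ρ (nrm Δ (reflAt B ρ x)) = b := by rw [h]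
      rw [nrm, ← hlamdef, hrefl] at h4 h
      simp only [map_add, map_smul, smul_eq_mul, hρρ, ← hb] at h4
      have h5 : lam = -1 := by
        have : lam⁻¹ * (-b) = b := by linarith
        field_simp at this
        linarith
      have h6 : x = b • ρ := by
        rw [h5] at h
        have h7 : (2 : ℝ) • x = (2 : ℝ) • (b • ρ) := by
          have h8 : x + x = x + (-1 : ℝ)⁻¹ • ((1 : ℝ) • x + (-(2 * b)) • ρ) := by rw [h]
          have h9 : ((-1 : ℝ))⁻¹ = -1 := by norm_num
          rw [h9] at h8
          rw [two_smul, h8]; module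
        exact smul_right_injective V (two_ne_zero) h7
      have h7 : B x x = b * b := by
        conv_lhs => rw [h6]
        simp [hρρ]
      rw [hxQ] at h7
      exact hb0 (mul_self_eq_zero.1 h7.symm)
    · apply Set.Subset.antisymm
      · intro y hy
        rcases hcase y hy with h | ⟨t, ht, hy', h⟩
        · exact Or.inl h
        · right
          have h5 : t * lam = 1 := by
            rw [hlam]
            field_simp at h
            linarith
          have h6 : t = lam⁻¹ := eq_inv_of_mul_eq_one_left h5
          change y = _
          rw [hy', hn, h6]
      · rintro y (rfl | rfl)
        · exact hxmem
        · refine ⟨⟨lam⁻¹, by rw [hpt, hn]⟩, ?_⟩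
          change B _ _ = 0
          rw [hn, hB, hp, mul_zero]
end
end
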